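/- Let k be a field of characteristic 0, and let S and R be integral domains that are finitely generated k-algebras, with R a k-subalgebra of S. Assume that R is integrally closed in its fraction field, and that every ideal of height 1 in R generates a proper ideal in S (i.e., for every ideal I of R with height I = 1, the ideal of S generated by the image of I is not the unit ideal). Let F : S → S be a k-algebra endomorphism with F(R) ⊆ R. If F is bijective, then the restriction of F to R, viewed as a map R → R, is bijective. -/

import Mathlib

/-!
Let `Φ` be the automorphism `F` of `S`.  Injectivity of the restriction is clear, so the point is
that the increasing union of the subalgebras `Φ⁻ⁿ R` is contained in `R`.

*Birationality.*  The ideal of `S ⊗ S` generated by the `r ⊗ 1 - 1 ⊗ r` with `r ∈ R` is mapped into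
itself by `Φ ⊗ Φ`, hence is invariant since `S ⊗ S` is noetherian.  Thus `s ⊗ 1 = 1 ⊗ s` in
`S ⊗[R] S` as soon as `Φⁿ s ∈ R`, and such an `s` is a fraction of elements of `R`
(`exists_mul_mem_of_apply_mem`).

*The bad primes.*  By normality the denominators of such fractions are concentrated in height one
primes of `R`, and by Chevalley's theorem only finitely many of these can occur
(`exists_finset_isBad`).  By the hypothesis on height one ideals, a bad prime generates a proper
ideal of `S`, so if there is one then some prime of `S` lies over a (possibly larger) bad prime.
The locus of such primes of `S` is closed and stable under `Φ`, so an iterate `G` of `Φ` fixes one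
of its components `P` (`not_isBad`).

*Approximation at a fixed prime.*  Let `Q` be the prime of `R` below `P`, and `G s ∈ R`.
Birationality, applied to the residue fields of `P` and `Q`, shows that `s` is congruent to an
element of `R_Q` modulo the maximal ideal of `S_P`.  Since `R_Q` has Artinian quotients, the same
follows modulo all powers of this maximal ideal (`exists_sub_mem_pow_of_residue`).

*Limits lie in `R_Q`.*  It remains to see that a fraction `s` of `R` lying in `T = S_P` which is a
limit of elements of `R_Q` belongs to `R_Q` (`exists_mem_denom_of_local_approx`).  Enlarging the
base field, one may take `Q` maximal (`exists_mem_denom_of_approx`).  Let `R` be finite over a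
polynomial ring `k[x]` with all variables in `Q`.  The limit `s` comes from `R ⊗ k⟦x⟧`, a ring flat
over `R`.  Let `K` be the kernel of the map from `R ⊗ k⟦x⟧` to the completion of `T`.  As the
partial derivatives extend to `R` and `T` up to denominators, the ideal `K + Ann K` is stable under
multiples of them.  Since `k` has characteristic zero, it follows that its trace on `R` is nonzero
and contained in no height one prime of `R`.  By normality this gives an `e` in `R ⊗ k⟦x⟧` with
`e - 1 ∈ K` and `e K = 0` (`exists_split_element`).  Then `e` lies in the extension of the ideal of
denominators of `s`, by flatness (`mem_map_denom_of_flat`), and so this ideal is not contained in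
`Q`.
-/

/-- The height of an ideal `I`: the infimum of the heights of the prime ideals
containing `I` (in the prime spectrum, ordered by inclusion). -/
noncomputable def Ideal.heightOf {R : Type*} [CommRing R] (I : Ideal R) : ℕ∞ :=
  ⨅ p ∈ {p : PrimeSpectrum R | I ≤ p.asIdeal}, Order.height p

/-! ### Ideals of denominators -/

section ColonIdeals

variable {R : Type*} [CommRing R]

/-- The ideal of denominators of the fraction `α / b`: all `r` with `b ∣ r * α`. -/
def denom (b α : R) : Ideal R where
  carrier := {r | b ∣ r * α}
  zero_mem' := by simp
  add_mem' := fun {x y} hx hy => by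
    simp only [Set.mem_ofPred_eq, add_mul] at *
    exact dvd_add hx hy
  smul_mem' := fun c x hx => by
    simp only [Set.mem_ofPred_eq, smul_eq_mul, mul_assoc] at *
    exact hx.mul_left c

theorem mem_denom {b α r : R} : r ∈ denom b α ↔ b ∣ r * α := Iff.rfl

theorem exists_eq_denom_of_mem_minimalPrimes [IsNoetherianRing R] {b α : R} {p : Ideal R}
    (hp : p ∈ (denom b α).minimalPrimes) : ∃ β, p = denom b β := by
  have hmem : ∀ y r : R, r ∈ (Ideal.span {b} : Submodule R R).colon {y} ↔ b ∣ r * y := fun y r => by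
    rw [Submodule.mem_colon_singleton, smul_eq_mul, Ideal.mem_span_singleton]
  have h : denom b α = (Ideal.span {b} : Submodule R R).colon {α} := by
    ext r; rw [hmem, mem_denom]
  rw [h] at hp
  obtain ⟨y, hy⟩ := Submodule.exists_eq_colon_of_mem_minimalPrimes hp
  exact ⟨y, by ext r; rw [hy, hmem, mem_denom]⟩

/-- The ideal `p` is generated by `a` after inverting a single element `t` outside `p`; for prime
`p` and noetherian `R` this says that `p` becomes principal, generated by `a`, in the localization
at `p`. -/
structure IsLocallyGenBy (p : Ideal R) (a t : R) : Prop where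
  mem : a ∈ p
  notMem : t ∉ p
  exists_eq : ∀ z ∈ p, ∃ z', t * z = a * z'

/-- In an integrally closed noetherian domain an associated prime of a nonzero principal ideal is
locally principal: otherwise `β / b` would stabilise `p`, hence be integral. -/
theorem exists_isLocallyGenBy [IsDomain R] [IsNoetherianRing R] [IsIntegrallyClosed R]
    {b β : R} (hb : b ≠ 0) [hp : (denom b β).IsPrime] :
    ∃ a t, IsLocallyGenBy (denom b β) a t := by
  set p := denom b β with hpdef
  by_cases h : ∃ a ∈ p, ∃ t, a * β = b * t ∧ t ∉ p
  · obtain ⟨a, ha, t, hat, ht⟩ := h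
    refine ⟨a, t, ha, ht, fun z hz => ?_⟩
    obtain ⟨z', hz'⟩ := mem_denom.1 hz
    refine ⟨z', mul_left_cancel₀ hb ?_⟩
    linear_combination (-z) * hat + a * hz'
  · push Not at h
    exfalso
    let K := FractionRing R
    have hbK : algebraMap R K b ≠ 0 := by
      simpa using hb
    have hintegral : IsIntegral R (algebraMap R K β / algebraMap R K b) := by
      refine isIntegral_of_smul_mem_submodule (M := K)
        (Submodule.map (Algebra.linearMap R K) p) ?_ ?_ _ ?_
      · intro h0
        have hbp : b ∈ p := mem_denom.2 ⟨β, rfl⟩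
        have : algebraMap R K b ∈ Submodule.map (Algebra.linearMap R K) p := ⟨b, hbp, rfl⟩
        rw [h0] at this
        exact hbK (by simpa using this)
      · exact (IsNoetherian.noetherian p).map _
      · rintro _ ⟨z, hz, rfl⟩
        obtain ⟨t, ht⟩ := mem_denom.1 hz
        refine ⟨t, h z hz t ht, ?_⟩
        have := congrArg (algebraMap R K) ht
        simp only [map_mul] at this
        simp only [Algebra.linearMap_apply, smul_eq_mul]
        rw [div_mul_eq_mul_div, eq_div_iff hbK]
        linear_combination -this
    obtain ⟨y, hy⟩ := IsIntegrallyClosed.isIntegral_iff.1 hintegral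
    apply hp.ne_top
    rw [Ideal.eq_top_iff_one]
    refine ⟨y, ?_⟩
    apply IsFractionRing.injective R K
    rw [eq_div_iff hbK] at hy
    simp only [one_mul, map_mul]
    linear_combination -hy

theorem IsLocallyGenBy.height_eq_one [IsDomain R] [IsNoetherianRing R] {p : Ideal R}
    [p.IsPrime] {a t : R} (h : IsLocallyGenBy p a t) (hp : p ≠ ⊥) : p.height = 1 := by
  apply le_antisymm
  · apply Ideal.height_le_one_of_isPrincipal_of_mem_minimalPrimes (Ideal.span {a})
    refine ⟨⟨inferInstance, by simpa using h.mem⟩, fun q hq hqp z hz => ?_⟩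
    obtain ⟨z', hz'⟩ := h.exists_eq z hz
    have : t * z ∈ q := hz' ▸ q.mul_mem_right _ (hq.2 (Ideal.mem_span_singleton_self a))
    exact (hq.1.mem_or_mem this).resolve_left fun ht => h.notMem (hqp ht)
  · rw [Order.one_le_iff_pos, pos_iff_ne_zero, ne_eq, Ideal.height_eq_zero_iff_eq_bot]
    exact hp

/-- Every nonzero element has a finite order of vanishing along a locally principal prime. -/
theorem IsLocallyGenBy.exists_order [IsDomain R] [IsNoetherianRing R] {p : Ideal R}
    [hp : p.IsPrime] {a t : R} (h : IsLocallyGenBy p a t) {j : R} (hj : j ≠ 0) :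
    ∃ n, ∃ u ∉ p, ∃ w ∉ p, u * j = a ^ n * w := by
  let L := Localization.AtPrime p
  have hfin : FiniteMultiplicity (algebraMap R L a) (algebraMap R L j) := by
    apply FiniteMultiplicity.of_not_isUnit
    · rw [IsLocalization.AtPrime.isUnit_to_map_iff L p]
      exact fun hh => hh h.mem
    · simpa using hj
  by_contra! hcon
  -- all quotients of `j` by powers of `a` would again be divisible by `a` locally
  have key : ∀ n, ∃ u ∉ p, ∃ w, u * j = a ^ n * w := by
    intro n
    induction n with
    | zero => exact ⟨1, (Ideal.ne_top_iff_one p).1 hp.ne_top, j, by ring⟩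
    | succ n ih =>
      obtain ⟨u, hu, w, huw⟩ := ih
      have hw : w ∈ p := by
        by_contra hw
        exact hcon n u hu w hw huw
      obtain ⟨z, hz⟩ := h.exists_eq w hw
      refine ⟨t * u, fun htu => (hp.mem_or_mem htu).elim h.notMem hu, z, ?_⟩
      linear_combination t * huw + a ^ n * hz
  obtain ⟨n, hn⟩ := hfin
  obtain ⟨u, hu, w, huw⟩ := key (n + 1)
  apply hn
  rw [← ((IsLocalization.AtPrime.isUnit_to_map_iff L p u).2 hu).dvd_mul_left, ← map_mul, huw,
    map_mul, map_pow]
  exact dvd_mul_right _ _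

/-- If `p` is minimal among the primes at which `α / b` is not defined, then the inverse of
`α / b` lies in the maximal ideal of the localization at `p`. -/
theorem exists_inverse_of_mem_minimalPrimes [IsDomain R] [IsNoetherianRing R]
    {b α : R} {p : Ideal R} (hp : p ∈ (denom b α).minimalPrimes) {a t : R}
    (h : IsLocallyGenBy p a t) (hb : b ≠ 0): ∃ c ∈ p, ∃ w ∉ p, c * α = b * w := by
  have hpp : p.IsPrime := hp.1.1
  have hex : ∃ n, ∃ u ∉ p, u * a ^ n ∈ denom b α := by
    by_contra! hcon
    have hdisj : Disjoint (denom b α : Set R) ((p.primeCompl ⊔ Submonoid.powers a : Submonoid R)) := by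
      rw [Set.disjoint_left]
      rintro x hx hx'
      obtain ⟨u, hu, _, ⟨n, rfl⟩, rfl⟩ := Submonoid.mem_sup.1 hx'
      exact hcon n u hu hx
    obtain ⟨q, hq, hle, hqd⟩ := Ideal.exists_le_prime_disjoint _ _ hdisj
    rw [Set.disjoint_left] at hqd
    have hqp : q ≤ p := fun x hx => by
      by_contra hxp
      exact hqd hx ((le_sup_left : p.primeCompl ≤ _) hxp)
    exact hqd (hp.2 ⟨hq, hle⟩ hqp h.mem)
      ((le_sup_right : Submonoid.powers a ≤ p.primeCompl ⊔ _) ⟨1, by simp⟩)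
  classical
  obtain ⟨u, hu, huα⟩ := Nat.find_spec hex
  have hmin := fun m => Nat.find_min (H := hex) (m := m)
  generalize Nat.find hex = n at *
  obtain ⟨w, hw⟩ := mem_denom.1 huα
  cases n with
  | zero => exact absurd (hp.1.2 huα) (by simpa using hu)
  | succ n =>
    refine ⟨u * a ^ (n + 1), p.mul_mem_left _ ?_, w, fun hwp => ?_, hw⟩
    · exact p.pow_mem_of_mem h.mem _ (by omega)
    obtain ⟨w', hw'⟩ := h.exists_eq w hwp
    have ha0 : a ≠ 0 := by
      rintro rfl
      have hbp : b ∈ p := hp.1.2 ⟨α, rfl⟩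
      obtain ⟨z, hz⟩ := h.exists_eq b hbp
      rw [zero_mul, mul_eq_zero] at hz
      rcases hz with rfl | hz
      · exact h.notMem p.zero_mem
      · exact hb hz
    refine hmin n (by omega) ⟨t * u, fun htu => ?_, w', mul_left_cancel₀ ha0 ?_⟩
    · exact (hpp.mem_or_mem htu).elim h.notMem hu
    · linear_combination t * hw + b * hw'

/-- Chevalley: the image of a dominant morphism of finite type contains a nonempty principal open
set. -/
theorem exists_forall_mem_range_comap {S : Type*} [CommRing S] [IsDomain R] [IsNoetherianRing R]
    [IsDomain S] [Algebra R S] [FaithfulSMul R S] [Algebra.FiniteType R S] :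
    ∃ f : R, f ≠ 0 ∧ ∀ p : Ideal R, p.IsPrime → f ∉ p →
      ∃ P : Ideal S, P.IsPrime ∧ P.comap (algebraMap R S) = p := by
  have hfp : (algebraMap R S).FinitePresentation := by
    rw [RingHom.finitePresentation_algebraMap]
    exact (Algebra.FinitePresentation.of_finiteType).1 inferInstance
  obtain ⟨C, hC⟩ := PrimeSpectrum.exists_constructibleSetData_iff.2
    (PrimeSpectrum.isConstructible_range_comap hfp)
  have hbot : (⟨⊥, Ideal.isPrime_bot⟩ : PrimeSpectrum R) ∈ C.toSet := by
    rw [hC]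
    refine ⟨⟨⊥, Ideal.isPrime_bot⟩, ?_⟩
    ext1
    exact Ideal.comap_bot_of_injective _ (FaithfulSMul.algebraMap_injective R S)
  rw [PrimeSpectrum.ConstructibleSetData.toSet, Set.mem_iUnion₂] at hbot
  obtain ⟨D, hD, hbot⟩ := hbot
  have hg : Set.range D.g ⊆ {0} := hbot.1
  have hf : D.f ≠ 0 := fun h0 => hbot.2 (by
    rw [PrimeSpectrum.mem_zeroLocus, h0]; simp)
  refine ⟨D.f, hf, fun p hp hfp => ?_⟩
  have hmem : (⟨p, hp⟩ : PrimeSpectrum R) ∈ C.toSet := by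
    rw [PrimeSpectrum.ConstructibleSetData.toSet, Set.mem_iUnion₂]
    refine ⟨D, hD, ?_, fun h => hfp (h rfl)⟩
    rw [PrimeSpectrum.mem_zeroLocus]
    intro x hx
    rw [Set.mem_singleton_iff.1 (hg hx)]
    exact p.zero_mem
  rw [hC] at hmem
  obtain ⟨P, hP⟩ := hmem
  exact ⟨P.asIdeal, P.2, congrArg PrimeSpectrum.asIdeal hP⟩

end ColonIdeals

/-! ### Extending partial derivatives to a finite extension of a polynomial ring -/

section Derivations

set_option linter.unusedSectionVars false

open MvPolynomial in
theorem exists_pderiv_ne_zero {k σ : Type*} [Field k] [CharZero k] (g : MvPolynomial σ k)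
    (hg : g.totalDegree ≠ 0) :
    ∃ i, pderiv i g ≠ 0 ∧ (pderiv i g).totalDegree < g.totalDegree := by
  classical
  have hg0 : g ≠ 0 := by rintro rfl; simp at hg
  obtain ⟨μ, hμ, hμd⟩ : ∃ μ ∈ g.support, g.totalDegree = μ.degree := by
    obtain ⟨μ, hμ, h⟩ := Finset.exists_mem_eq_sup g.support (support_nonempty.mpr hg0)
      (fun s => s.degree)
    exact ⟨μ, hμ, h⟩
  obtain ⟨i, hi⟩ : ∃ i, μ i ≠ 0 := by
    by_contra! h
    have : μ = 0 := by ext i; simp [h i]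
    rw [hμd, this] at hg
    simp at hg
  have hdeg : ∀ m, coeff m (pderiv i g) ≠ 0 → m.degree + 1 ≤ g.totalDegree := by
    intro m hm
    rw [coeff_pderiv] at hm
    have h1 : coeff (m + Finsupp.single i 1) g ≠ 0 := fun h => hm (by simp [h])
    have h2 := le_totalDegree (mem_support_iff.mpr h1)
    have h3 : (m + Finsupp.single i 1).degree = m.degree + 1 := by simp
    rw [← h3]
    exact h2
  refine ⟨i, fun h => ?_, ?_⟩
  · have h1 := coeff_pderiv g (i := i) (μ - Finsupp.single i 1)
    rw [h, tsub_add_cancel_of_le (by simpa [Nat.one_le_iff_ne_zero] using hi)] at h1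
    have h2 : (((μ - Finsupp.single i 1 : σ →₀ ℕ) i : ℕ) : k) + 1 ≠ 0 := Nat.cast_add_one_ne_zero _
    have h3 : coeff μ g ≠ 0 := mem_support_iff.mp hμ
    simp only [coeff_zero] at h1
    rcases mul_eq_zero.mp h1.symm with h4 | h4
    · exact h3 h4
    · exact h2 h4
  · refine (Finset.sup_lt_iff (Nat.pos_of_ne_zero hg)).mpr fun m hm => ?_
    exact hdeg m (mem_support_iff.mp hm)

variable {k : Type*} [Field k] [CharZero k] {σ : Type*}
  {R : Type*} [CommRing R] [IsDomain R] [Algebra (MvPolynomial σ k) R]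
  {M : Type*} [Field M] [Algebra R M] [FaithfulSMul R M]

open Polynomial in
/-- A monic polynomial of minimal degree with `f(r) ∈ p` has `f'(r) ∉ p` in characteristic zero. -/
theorem exists_monic_separable_mod [Algebra.IsIntegral (MvPolynomial σ k) R]
    (p : Ideal R) [p.IsPrime] (r : R) :
    ∃ f : (MvPolynomial σ k)[X], aeval r f ∈ p ∧ aeval r (derivative f) ∉ p := by
  classical
  let H : ℕ → Prop := fun n => ∃ f : (MvPolynomial σ k)[X], f.Monic ∧ f.natDegree = n ∧
    aeval r f ∈ p
  have hex : ∃ n, H n := by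
    obtain ⟨f, hf, hfr⟩ := Algebra.IsIntegral.isIntegral (R := MvPolynomial σ k) r
    exact ⟨_, f, hf, rfl, by rw [aeval_def, hfr]; exact p.zero_mem⟩
  obtain ⟨f, hf, hfn, hfp⟩ := Nat.find_spec hex
  refine ⟨f, hfp, fun hder => ?_⟩
  have hn : f.natDegree ≠ 0 := by
    intro h0
    rw [hf.natDegree_eq_zero.mp h0, map_one] at hfp
    exact (Ideal.ne_top_iff_one p).mp ‹p.IsPrime›.ne_top hfp
  set n := f.natDegree with hn_def
  have hnk : (n : k) ≠ 0 := by exact_mod_cast hn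
  -- dividing the derivative by `n` makes it monic of smaller degree
  let g : (MvPolynomial σ k)[X] := C (MvPolynomial.C (n : k)⁻¹) * derivative f
  have hcoeff : g.coeff (n - 1) = 1 := by
    have h1 : n - 1 + 1 = n := by omega
    have h2 : ((n - 1 : ℕ) : MvPolynomial σ k) + 1 = n := by exact_mod_cast congrArg Nat.cast h1
    rw [coeff_C_mul, coeff_derivative, h1, h2, hn_def, hf.coeff_natDegree, one_mul, ← hn_def,
      ← map_natCast (MvPolynomial.C : k →+* MvPolynomial σ k), ← map_mul, inv_mul_cancel₀ hnk,
      map_one]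
  have hgdeg : g.natDegree ≤ n - 1 :=
    (natDegree_C_mul_le _ _).trans (natDegree_derivative_le f)
  have hgm : g.Monic := monic_of_natDegree_le_of_coeff_eq_one _ hgdeg hcoeff
  have hg : H g.natDegree := ⟨g, hgm, rfl, by
    simp only [g, map_mul]
    exact p.mul_mem_left _ hder⟩
  have := Nat.find_min' hex hg
  omega

/-- The denominators of a derivation `D` of a field containing `R`: the `h ∈ R` with
`h D(R) ⊆ R`. -/
def derDenom (R : Type*) [CommRing R] {M : Type*} [Field M] [Algebra R M]
    (D : Derivation ℤ M M) : Ideal R where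
  carrier := {h | ∀ r : R, ∃ r' : R, algebraMap R M r' = algebraMap R M h * D (algebraMap R M r)}
  zero_mem' r := ⟨0, by simp⟩
  add_mem' {a b} ha hb r := by
    obtain ⟨x, hx⟩ := ha r
    obtain ⟨y, hy⟩ := hb r
    exact ⟨x + y, by rw [map_add, map_add, hx, hy, add_mul]⟩
  smul_mem' c a ha r := by
    obtain ⟨x, hx⟩ := ha r
    exact ⟨c * x, by rw [smul_eq_mul, map_mul, map_mul, hx, mul_assoc]⟩

theorem mem_derDenom {D : Derivation ℤ M M} {h : R} : h ∈ derDenom R D ↔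
    ∀ r : R, ∃ r' : R, algebraMap R M r' = algebraMap R M h * D (algebraMap R M r) := Iff.rfl

/-- `D` restricts on the polynomial ring to the partial derivative in direction `i`. -/
def ExtendsPDeriv (k R : Type*) [Field k] {σ : Type*} [CommRing R] [Algebra (MvPolynomial σ k) R]
    {M : Type*} [Field M] [Algebra R M] (i : σ) (D : Derivation ℤ M M) : Prop :=
  ∀ q : MvPolynomial σ k, D (algebraMap R M (algebraMap _ R q)) =
    algebraMap R M (algebraMap _ R (MvPolynomial.pderiv i q))

open Polynomial in
theorem ExtendsPDeriv.apply_aeval {i : σ} {D : Derivation ℤ M M} (hD : ExtendsPDeriv k R i D)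
    (r : R) (f : (MvPolynomial σ k)[X]) :
    ∃ g : (MvPolynomial σ k)[X], D (algebraMap R M (aeval r f)) = algebraMap R M (aeval r g) +
      algebraMap R M (aeval r (derivative f)) * D (algebraMap R M r) := by
  induction f using Polynomial.induction_on' with
  | add p q hp hq =>
    obtain ⟨g, hg⟩ := hp
    obtain ⟨g', hg'⟩ := hq
    refine ⟨g + g', ?_⟩
    simp only [map_add, hg, hg']
    ring
  | monomial n a =>
    refine ⟨monomial n (MvPolynomial.pderiv i a), ?_⟩
    simp only [aeval_monomial, map_mul, map_pow, Derivation.leibniz, Derivation.leibniz_pow, hD a,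
      derivative_monomial, map_natCast, smul_eq_mul, nsmul_eq_mul]
    ring

/-- The extension of a partial derivative to `R` has a polynomial as common denominator. -/
theorem ExtendsPDeriv.exists_mem_derDenom [Module.Finite (MvPolynomial σ k) R]
    [FaithfulSMul (MvPolynomial σ k) R]
    {i : σ} {D : Derivation ℤ M M} (hD : ExtendsPDeriv k R i D) :
    ∃ h : MvPolynomial σ k, h ≠ 0 ∧ algebraMap _ R h ∈ derDenom R D := by
  classical
  have hone : ∀ r : R, ∃ h : R, h ≠ 0 ∧ ∃ r' : R,
      algebraMap R M r' = algebraMap R M h * D (algebraMap R M r) := by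
    intro r
    obtain ⟨f, hf, hf'⟩ := exists_monic_separable_mod (k := k) (σ := σ) (⊥ : Ideal R) r
    obtain ⟨g, hg⟩ := hD.apply_aeval r f
    rw [Ideal.mem_bot] at hf hf'
    refine ⟨_, hf', -Polynomial.aeval r g, ?_⟩
    rw [hf, map_zero, map_zero] at hg
    rw [map_neg]
    linear_combination hg
  choose h hh0 hh using hone
  obtain ⟨s, hs⟩ := Module.Finite.fg_top (R := MvPolynomial σ k) (M := R)
  have hmem : ∏ x ∈ s, h x ∈ derDenom R D := by
    intro r
    have hr : r ∈ Submodule.span (MvPolynomial σ k) (s : Set R) := by rw [hs]; trivial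
    induction hr using Submodule.span_induction with
    | mem x hx =>
      obtain ⟨x', hx'⟩ := hh x
      refine ⟨(∏ y ∈ s.erase x, h y) * x', ?_⟩
      rw [← Finset.prod_erase_mul s h hx, map_mul, map_mul, hx', mul_assoc]
    | zero => exact ⟨0, by simp⟩
    | add x y _ _ hx hy =>
      obtain ⟨x', hx'⟩ := hx
      obtain ⟨y', hy'⟩ := hy
      exact ⟨x' + y', by rw [map_add, map_add, map_add, hx', hy', mul_add]⟩
    | smul a x _ hx =>
      obtain ⟨x', hx'⟩ := hx
      refine ⟨algebraMap _ R a * x' +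
        (∏ y ∈ s, h y) * (algebraMap _ R (MvPolynomial.pderiv i a) * x), ?_⟩
      rw [Algebra.smul_def, map_mul (algebraMap R M), Derivation.leibniz, hD a, map_add, map_mul,
        map_mul (algebraMap R M) (∏ y ∈ s, h y), map_mul, hx', smul_eq_mul, smul_eq_mul]
      ring
  have hne : (derDenom R D).comap (algebraMap (MvPolynomial σ k) R) ≠ ⊥ :=
    Ideal.comap_ne_bot_of_integral_mem (Finset.prod_ne_zero_iff.mpr fun x _ => hh0 x) hmem
      (Algebra.IsIntegral.isIntegral _)
  obtain ⟨a, ha, ha0⟩ := Submodule.exists_mem_ne_zero_of_ne_bot hne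
  exact ⟨a, ha0, ha⟩

/-- At a nonzero locally principal prime `p`, some `R`-valued multiple of a partial derivative
maps an element of `p` outside `p`. -/
theorem exists_derivation_notMem [IsNoetherianRing R] [Module.Finite (MvPolynomial σ k) R]
    [FaithfulSMul (MvPolynomial σ k) R] {D : σ → Derivation ℤ M M}
    (hD : ∀ i, ExtendsPDeriv k R i (D i)) {p : Ideal R} [p.IsPrime] (hp : p ≠ ⊥) {a t : R}
    (hat : IsLocallyGenBy p a t) :
    ∃ i, ∃ h ∈ derDenom R (D i), ∃ z ∈ p, ∃ z' ∉ p,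
      algebraMap R M z' = algebraMap R M h * D i (algebraMap R M z) := by
  classical
  -- a polynomial in `p` with a partial derivative outside `p`
  obtain ⟨g, hgp, i, hgi⟩ : ∃ g : MvPolynomial σ k, algebraMap _ R g ∈ p ∧
      ∃ i, algebraMap _ R (MvPolynomial.pderiv i g) ∉ p := by
    by_contra! hcon
    obtain ⟨x, hx, hx0⟩ := Submodule.exists_mem_ne_zero_of_ne_bot hp
    have hne : p.comap (algebraMap (MvPolynomial σ k) R) ≠ ⊥ :=
      Ideal.comap_ne_bot_of_integral_mem hx0 hx (Algebra.IsIntegral.isIntegral _)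
    obtain ⟨g, hg, hg0⟩ := Submodule.exists_mem_ne_zero_of_ne_bot hne
    induction hn : g.totalDegree using Nat.strong_induction_on generalizing g with
    | _ n ih =>
      by_cases h0 : g.totalDegree = 0
      · rw [MvPolynomial.totalDegree_eq_zero_iff_eq_C] at h0
        have hc : MvPolynomial.coeff 0 g ≠ 0 := fun h => hg0 (by rw [h0, h, map_zero])
        rw [h0] at hg
        exact ‹p.IsPrime›.ne_top (Ideal.eq_top_of_isUnit_mem _ hg
          ((IsUnit.mk0 _ hc).map (algebraMap (MvPolynomial σ k) R |>.comp MvPolynomial.C)))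
      · obtain ⟨i, hi0, hilt⟩ := exists_pderiv_ne_zero g h0
        exact ih _ (hn ▸ hilt) _ (hcon g hg i) hi0 rfl
  refine ⟨i, ?_⟩
  let H : ℕ → Prop := fun e => ∃ w ∉ p, a ^ e * w ∈ derDenom R (D i)
  have hex : ∃ e, H e := by
    obtain ⟨h, hh0, hh⟩ := (hD i).exists_mem_derDenom
    have hh0' : algebraMap _ R h ≠ 0 := by
      simpa using (FaithfulSMul.algebraMap_injective (MvPolynomial σ k) R).ne hh0
    obtain ⟨n, u, _, w, hw, huw⟩ := hat.exists_order hh0'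
    exact ⟨n, w, hw, huw ▸ (derDenom R (D i)).mul_mem_left u hh⟩
  obtain ⟨w, hw, hwm⟩ := Nat.find_spec hex
  set e := Nat.find hex with he
  by_contra! hcon
  have hstab : ∀ z ∈ p, ∀ z', algebraMap R M z' =
      algebraMap R M (a ^ e * w) * D i (algebraMap R M z) → z' ∈ p := by
    intro z hz z' hz'
    by_contra hz'p
    exact hcon _ hwm z hz z' hz'p hz'
  have hinj := FaithfulSMul.algebraMap_injective R M
  rcases Nat.eq_zero_or_pos e with h0 | hpos
  · have := hstab _ hgp (w * algebraMap _ R (MvPolynomial.pderiv i g)) (by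
      rw [hD i g, h0, pow_zero, one_mul, map_mul])
    exact (‹p.IsPrime›.mem_or_mem this).elim hw hgi
  -- the derivation has values in `p`, so can be divided by `a`
  have hall : ∀ r r', algebraMap R M r' =
      algebraMap R M (a ^ e * w) * D i (algebraMap R M r) → r' ∈ p := by
    intro r r' hr'
    have hap : a ^ e * w ∈ p := p.mul_mem_right _ (Ideal.pow_mem_of_mem _ hat.mem _ hpos)
    obtain ⟨f, hf, hf'⟩ := exists_monic_separable_mod (k := k) (σ := σ) p r
    obtain ⟨q, hq⟩ := (hD i).apply_aeval r f
    have := hstab _ hf (a ^ e * w * Polynomial.aeval r q +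
      Polynomial.aeval r (Polynomial.derivative f) * r') (by
        rw [hq, map_add, map_mul, map_mul _ _ r', hr']
        ring)
    rw [Ideal.add_mem_iff_right _ (p.mul_mem_right _ hap)] at this
    exact (‹p.IsPrime›.mem_or_mem this).resolve_left hf'
  have hlow : H (e - 1) := by
    refine ⟨t * w, fun h => (‹p.IsPrime›.mem_or_mem h).elim hat.notMem hw, fun r => ?_⟩
    obtain ⟨r', hr'⟩ := hwm r
    obtain ⟨z, hz⟩ := hat.exists_eq r' (hall r r' hr')
    refine ⟨z, ?_⟩
    have ha0 : a ≠ 0 := by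
      rintro rfl
      apply hp
      rw [eq_bot_iff]
      intro z hz
      obtain ⟨z', hz'⟩ := hat.exists_eq z hz
      rw [zero_mul] at hz'
      exact (mul_eq_zero.mp hz').resolve_left fun h => hat.notMem (h ▸ p.zero_mem)
    have ha0' : algebraMap R M a ≠ 0 := by simpa using hinj.ne ha0
    apply mul_left_cancel₀ ha0'
    rw [← map_mul, ← hz, map_mul, hr']
    have : a ^ e = a * a ^ (e - 1) := by rw [← pow_succ']; congr 1; omega
    rw [this]
    simp only [map_mul]
    ring
  have := Nat.find_min' hex hlow
  omega

/-- A nonzero ideal stable under the `R`-valued multiples of the partial derivatives lies in no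
nonzero locally principal prime `p`: the least order of vanishing along `p` of its elements could
be lowered by differentiating. -/
theorem not_le_of_derivation_stable [IsNoetherianRing R] [Module.Finite (MvPolynomial σ k) R]
    [FaithfulSMul (MvPolynomial σ k) R] {D : σ → Derivation ℤ M M}
    (hD : ∀ i, ExtendsPDeriv k R i (D i)) {p : Ideal R} [p.IsPrime] (hp : p ≠ ⊥) {a t : R}
    (hat : IsLocallyGenBy p a t) {J : Ideal R} (hJ : J ≠ ⊥)
    (hstab : ∀ i, ∀ h ∈ derDenom R (D i), ∀ z ∈ J, ∀ z',
      algebraMap R M z' = algebraMap R M h * D i (algebraMap R M z) → z' ∈ J) :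
    ¬ J ≤ p := by
  classical
  intro hJp
  obtain ⟨i, h, hh, z, hz, z', hz'p, hz'⟩ := exists_derivation_notMem hD hp hat
  obtain ⟨da, hda⟩ := hh a
  have hinj := FaithfulSMul.algebraMap_injective R M
  have hdap : da ∉ p := by
    intro hdap
    obtain ⟨y, hy⟩ := hat.exists_eq z hz
    obtain ⟨dt, hdt⟩ := hh t
    obtain ⟨dy, hdy⟩ := hh y
    have key : t * z' = da * y + a * dy - dt * z := by
      apply hinj
      have h1 := congrArg (fun x => algebraMap R M h * D i (algebraMap R M x)) hy
      simp only [map_mul, Derivation.leibniz, smul_eq_mul] at h1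
      simp only [map_sub, map_add, map_mul, hz', hda, hdy, hdt]
      linear_combination h1
    have : t * z' ∈ p := key ▸ p.sub_mem (p.add_mem (p.mul_mem_right _ hdap)
      (p.mul_mem_right _ hat.mem)) (p.mul_mem_left _ hz)
    exact (‹p.IsPrime›.mem_or_mem this).elim hat.notMem hz'p
  let H : ℕ → Prop := fun e => ∃ w ∉ p, a ^ e * w ∈ J
  have hex : ∃ e, H e := by
    obtain ⟨j, hj, hj0⟩ := Submodule.exists_mem_ne_zero_of_ne_bot hJ
    obtain ⟨n, u, _, w, hw, huw⟩ := hat.exists_order hj0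
    exact ⟨n, w, hw, huw ▸ J.mul_mem_left u hj⟩
  obtain ⟨w, hw, hwm⟩ := Nat.find_spec hex
  set e := Nat.find hex with he
  rcases Nat.eq_zero_or_pos e with h0 | hpos
  · rw [h0, pow_zero, one_mul] at hwm
    exact hw (hJp hwm)
  obtain ⟨dw, hdw⟩ := hh w
  have hlow : H (e - 1) := by
    refine ⟨(e : R) * da * w + a * dw, fun hmem => ?_, ?_⟩
    · rw [Ideal.add_mem_iff_left _ (p.mul_mem_right _ hat.mem)] at hmem
      have he' : (e : R) ∉ p := by
        intro h
        have hek : (e : k) ≠ 0 := by exact_mod_cast hpos.ne'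
        refine ‹p.IsPrime›.ne_top (Ideal.eq_top_of_isUnit_mem _ h ?_)
        have := (IsUnit.mk0 _ hek).map (algebraMap (MvPolynomial σ k) R |>.comp MvPolynomial.C)
        rwa [map_natCast] at this
      rcases ‹p.IsPrime›.mem_or_mem hmem with h1 | h1
      · exact (‹p.IsPrime›.mem_or_mem h1).elim he' hdap
      · exact hw h1
    · refine hstab i h hh _ hwm _ ?_
      have : a ^ e = a * a ^ (e - 1) := by rw [← pow_succ']; congr 1; omega
      simp only [map_mul, map_add, map_pow, map_natCast, hda, hdw, Derivation.leibniz,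
        Derivation.leibniz_pow, smul_eq_mul, nsmul_eq_mul]
      have h2 := congrArg (algebraMap R M) this
      simp only [map_pow, map_mul] at h2
      rw [h2]
      ring
  have := Nat.find_min' hex hlow
  omega

end Derivations

/-! ### Base change to power series -/

section PowerSeries

set_option linter.unusedSectionVars false

open TensorProduct

variable {k : Type*} [Field k] [CharZero k] {σ : Type*} [Finite σ]
  {R : Type*} [CommRing R] [Algebra (MvPolynomial σ k) R]

theorem flat_mvPowerSeries : Module.Flat (MvPolynomial σ k) (MvPowerSeries σ k) := by
  have := AdicCompletion.flat_of_isNoetherian (MvPolynomial.idealOfVars σ k)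
  exact Module.Flat.of_linearEquiv (MvPowerSeries.toAdicCompletionAlgEquiv σ k).toLinearEquiv

theorem isNoetherianRing_tensor_mvPowerSeries [Module.Finite (MvPolynomial σ k) R] :
    IsNoetherianRing (R ⊗[MvPolynomial σ k] MvPowerSeries σ k) := by
  have h : IsNoetherianRing (MvPowerSeries σ k ⊗[MvPolynomial σ k] R) :=
    IsNoetherianRing.of_finite (MvPowerSeries σ k) _
  exact isNoetherianRing_of_ringEquiv _
    (Algebra.TensorProduct.comm (MvPolynomial σ k) (MvPowerSeries σ k) R).toRingEquiv

/-- In characteristic zero `R` is generically étale over the polynomial ring, so its base change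
to power series remains reduced. -/
theorem isReduced_tensor_mvPowerSeries [IsDomain R] [Module.Finite (MvPolynomial σ k) R]
    [FaithfulSMul (MvPolynomial σ k) R] :
    IsReduced (R ⊗[MvPolynomial σ k] MvPowerSeries σ k) := by
  let A := MvPolynomial σ k
  let K := FractionRing A
  let L := FractionRing R
  let B := MvPowerSeries σ k
  let E := FractionRing B
  have := flat_mvPowerSeries (k := k) (σ := σ)
  let _ : Algebra K L := FractionRing.liftAlgebra A L
  have : IsScalarTower A K L := FractionRing.isScalarTower_liftAlgebra A L
  have : Module.Flat A L := Module.Flat.trans A K L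
  have : Algebra.IsAlgebraic K L := isAlgebraic_of_isFractionRing A R K L
  have : Algebra.EssFiniteType A L := Algebra.EssFiniteType.comp A R L
  have : Algebra.FormallyUnramified A K := Algebra.FormallyUnramified.of_isLocalization (nonZeroDivisors A)
  have : Algebra.FormallyUnramified K L := Algebra.FormallyUnramified.of_isSeparable K L
  have : Algebra.FormallyUnramified A L := Algebra.FormallyUnramified.comp A K L
  have hred : IsReduced (E ⊗[A] L) := Algebra.FormallyUnramified.isReduced_of_field E (E ⊗[A] L)
  have hinj : Function.Injective (Algebra.TensorProduct.map (IsScalarTower.toAlgHom A B E)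
      (IsScalarTower.toAlgHom A R L)) := by
    exact TensorProduct.map_injective_of_flat_flat' _ _ (IsFractionRing.injective B E)
      (IsFractionRing.injective R L)
  have hred' : IsReduced (B ⊗[A] R) := isReduced_of_injective _ hinj
  exact isReduced_of_injective (Algebra.TensorProduct.comm A R B)
    (Algebra.TensorProduct.comm A R B).injective

end PowerSeries

/-! ### Derivations of the base change -/

section Prolongation

set_option linter.unusedSectionVars false

open TensorProduct

variable {k : Type*} [Field k] {σ : Type*}
  {R : Type*} [CommRing R] [Algebra (MvPolynomial σ k) R]

/-- A derivation `δ` of `R` whose restriction to the polynomial ring is `h ∂ᵢ` induces the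
derivation `δ ⊗ 1 + h ⊗ ∂ᵢ` of `R ⊗ k⟦x⟧`. -/
theorem exists_derivation_tensor (i : σ) (h : R) (δ : Derivation ℤ R R)
    (hδ : ∀ q : MvPolynomial σ k, δ (algebraMap _ R q) =
      h * algebraMap _ R (MvPolynomial.pderiv i q)) :
    ∃ δ' : Derivation ℤ (R ⊗[MvPolynomial σ k] MvPowerSeries σ k)
        (R ⊗[MvPolynomial σ k] MvPowerSeries σ k),
      ∀ r c, δ' (r ⊗ₜ c) = δ r ⊗ₜ c + (h * r) ⊗ₜ MvPowerSeries.pderiv k i c := by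
  let f : R →+ MvPowerSeries σ k →+ R ⊗[MvPolynomial σ k] MvPowerSeries σ k :=
    AddMonoidHom.mk' (fun r => AddMonoidHom.mk'
      (fun c => δ r ⊗ₜ c + (h * r) ⊗ₜ MvPowerSeries.pderiv k i c)
      (fun c c' => by simp only [map_add, tmul_add]; abel))
      (fun r r' => by
        ext c
        simp only [map_add, mul_add, add_tmul, AddMonoidHom.mk'_apply, AddMonoidHom.add_apply]
        abel)
  have hf : ∀ r c, f r c = δ r ⊗ₜ c + (h * r) ⊗ₜ MvPowerSeries.pderiv k i c := fun _ _ => rfl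
  have hsm : ∀ (q : MvPolynomial σ k) (c : MvPowerSeries σ k),
      MvPowerSeries.pderiv k i (q • c) = MvPolynomial.pderiv i q • c +
        q • MvPowerSeries.pderiv k i c := by
    intro q c
    have h1 : ∀ (q : MvPolynomial σ k) (c : MvPowerSeries σ k),
        q • c = (q : MvPowerSeries σ k) * c := fun q c => by
      rw [Algebra.smul_def]; rfl
    rw [h1, h1, h1, Derivation.leibniz, MvPowerSeries.pderiv_coe, smul_eq_mul, smul_eq_mul]
    ring
  let g := TensorProduct.liftAddHom f (fun q r c => by
    rw [hf, hf, hsm, Algebra.smul_def, Derivation.leibniz, hδ, smul_eq_mul, smul_eq_mul,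
      tmul_add, ← smul_tmul, ← smul_tmul, ← smul_tmul, ]
    simp only [Algebra.smul_def, add_tmul]
    rw [show r * (h * (algebraMap _ R) (MvPolynomial.pderiv i q)) =
      (algebraMap _ R) (MvPolynomial.pderiv i q) * (h * r) by ring,
      show h * ((algebraMap _ R) q * r) = (algebraMap _ R) q * (h * r) by ring]
    abel)
  have hg : ∀ r c, g (r ⊗ₜ c) = δ r ⊗ₜ c + (h * r) ⊗ₜ MvPowerSeries.pderiv k i c := fun r c => by
    simp only [g, TensorProduct.liftAddHom_tmul, hf]
  refine ⟨Derivation.mk' g.toIntLinearMap fun x y => ?_, hg⟩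
  change g (x * y) = x * g y + y * g x
  induction x with
  | zero => simp
  | add x x' hx hx' => rw [add_mul, map_add, hx, hx', map_add]; ring
  | tmul r c =>
    induction y with
    | zero => simp
    | add y y' hy hy' => rw [mul_add, map_add, hy, hy', map_add]; ring
    | tmul r' c' =>
      simp only [Algebra.TensorProduct.tmul_mul_tmul, hg, Derivation.leibniz, smul_eq_mul,
        tmul_add, add_tmul, mul_add]
      rw [mul_comm c' c, mul_comm r' (δ r), mul_comm r' (h * r), mul_assoc h r r',
        show r * (h * r') = h * (r * r') by ring, mul_comm (δ r) r']
      abel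

end Prolongation

/-! ### The map to the completion -/

section TowerMaps

set_option linter.unusedSectionVars false

open TensorProduct

theorem Derivation.apply_mem_pow {T : Type*} [CommRing T] (d : Derivation ℤ T T) (m : Ideal T)
    (n : ℕ) {y : T} (hy : y ∈ m ^ (n + 1)) : d y ∈ m ^ n := by
  induction n generalizing y with
  | zero => simp
  | succ n ih =>
    rw [pow_succ] at hy
    induction hy using Submodule.mul_induction_on' with
    | mem_mul_mem a ha b hb =>
      rw [Derivation.leibniz, smul_eq_mul, smul_eq_mul]
      refine Ideal.add_mem _ (Ideal.mul_mem_right _ _ ha) ?_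
      rw [pow_succ']
      exact Ideal.mul_mem_mul hb (ih ha)
    | add a _ b _ ha hb =>
      rw [map_add]
      exact Ideal.add_mem _ ha hb

/-- A consequence of the Artin–Rees lemma: dividing by a nonzero `τ` costs a bounded amount of
`m`-adic precision. -/
theorem exists_forall_mem_pow_of_mul_mem {T : Type*} [CommRing T] [IsDomain T] [IsNoetherianRing T]
    (m : Ideal T) {τ : T} (hτ : τ ≠ 0) :
    ∃ c, ∀ n y, τ * y ∈ m ^ (n + c) → y ∈ m ^ n := by
  obtain ⟨c, hc⟩ := Ideal.exists_pow_inf_eq_pow_smul m (Ideal.span {τ})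
  refine ⟨c, fun n y hy => ?_⟩
  have h1 : τ * y ∈ m ^ (n + c) • (⊤ : Submodule T T) ⊓ Ideal.span {τ} :=
    ⟨by simpa using hy, Ideal.mul_mem_right _ _ (Ideal.mem_span_singleton_self τ)⟩
  rw [hc (n + c) (Nat.le_add_left c n), Nat.add_sub_cancel] at h1
  have h2 : τ * y ∈ m ^ n * Ideal.span {τ} :=
    Submodule.smul_mono le_rfl inf_le_right h1
  obtain ⟨z, hz, hzy⟩ := Ideal.mem_mul_span_singleton.mp h2
  rw [mul_comm] at hzy
  exact mul_left_cancel₀ hτ hzy ▸ hz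

variable {k : Type*} [Field k] {σ : Type*} [Finite σ]
  {R : Type*} [CommRing R] [Algebra (MvPolynomial σ k) R]
  {T : Type*} [CommRing T] [Algebra (MvPolynomial σ k) T] [Algebra R T]
  [IsScalarTower (MvPolynomial σ k) R T]

theorem algebraMap_mem_pow_of_mem_pow_idealOfVars {m : Ideal T}
    (hm : ∀ i, algebraMap (MvPolynomial σ k) T (MvPolynomial.X i) ∈ m) {n : ℕ}
    {q : MvPolynomial σ k} (hq : q ∈ MvPolynomial.idealOfVars σ k ^ n) :
    algebraMap (MvPolynomial σ k) T q ∈ m ^ n := by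
  have h1 : (MvPolynomial.idealOfVars σ k).map (algebraMap (MvPolynomial σ k) T) ≤ m := by
    rw [MvPolynomial.idealOfVars, Ideal.map_span, Ideal.span_le]
    rintro _ ⟨_, ⟨i, rfl⟩, rfl⟩
    exact hm i
  have h2 := Ideal.mem_map_of_mem (algebraMap (MvPolynomial σ k) T) hq
  rw [Ideal.map_pow] at h2
  exact Ideal.pow_right_mono h1 n h2

/-- Evaluation of power series modulo the `n`-th power of an ideal containing the variables. -/
noncomputable def powerSeriesModPow (m : Ideal T)
    (hm : ∀ i, algebraMap (MvPolynomial σ k) T (MvPolynomial.X i) ∈ m) (n : ℕ) :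
    MvPowerSeries σ k →ₐ[MvPolynomial σ k] T ⧸ m ^ n :=
  (Ideal.Quotient.liftₐ (MvPolynomial.idealOfVars σ k ^ n)
    (Algebra.ofId (MvPolynomial σ k) (T ⧸ m ^ n)) (fun q hq => by
      change Ideal.Quotient.mk (m ^ n) (algebraMap _ T q) = 0
      rw [Ideal.Quotient.eq_zero_iff_mem]
      exact algebraMap_mem_pow_of_mem_pow_idealOfVars hm hq)).comp
    (MvPowerSeries.truncTotalAlgHom σ k n)

theorem powerSeriesModPow_apply (m : Ideal T)
    (hm : ∀ i, algebraMap (MvPolynomial σ k) T (MvPolynomial.X i) ∈ m) (n : ℕ)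
    (c : MvPowerSeries σ k) : powerSeriesModPow m hm n c =
      Ideal.Quotient.mk (m ^ n) (algebraMap _ T (c.truncTotal n)) := rfl

theorem powerSeriesModPow_eq_mk (m : Ideal T)
    (hm : ∀ i, algebraMap (MvPolynomial σ k) T (MvPolynomial.X i) ∈ m) {n : ℕ}
    {c : MvPowerSeries σ k} {q : MvPolynomial σ k}
    (h : ∀ μ : σ →₀ ℕ, μ.degree < n → q.coeff μ = MvPowerSeries.coeff μ c) :
    powerSeriesModPow m hm n c = Ideal.Quotient.mk (m ^ n) (algebraMap _ T q) := by
  rw [powerSeriesModPow_apply, Ideal.Quotient.eq, ← map_sub]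
  refine algebraMap_mem_pow_of_mem_pow_idealOfVars hm
    ((MvPolynomial.mem_pow_idealOfVars_iff' ..).mpr fun μ hμ => ?_)
  rw [MvPolynomial.coeff_sub, h μ hμ, MvPowerSeries.coeff_truncTotal _ hμ, sub_self]

/-- The `n`-th of the compatible maps `R ⊗ k⟦x⟧ → T / mⁿ`. -/
noncomputable def towerMap (m : Ideal T)
    (hm : ∀ i, algebraMap (MvPolynomial σ k) T (MvPolynomial.X i) ∈ m) (n : ℕ) :
    R ⊗[MvPolynomial σ k] MvPowerSeries σ k →ₐ[MvPolynomial σ k] T ⧸ m ^ n :=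
  Algebra.TensorProduct.productMap (IsScalarTower.toAlgHom (MvPolynomial σ k) R (T ⧸ m ^ n))
    (powerSeriesModPow m hm n)

variable {m : Ideal T} {hm : ∀ i, algebraMap (MvPolynomial σ k) T (MvPolynomial.X i) ∈ m}

theorem towerMap_tmul (n : ℕ) (r : R) (c : MvPowerSeries σ k) :
    towerMap m hm n (r ⊗ₜ c) = Ideal.Quotient.mk (m ^ n) (algebraMap R T r) *
      powerSeriesModPow m hm n c :=
  Algebra.TensorProduct.productMap_apply_tmul _ _ _ _

theorem towerMap_algebraMap (n : ℕ) (r : R) :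
    towerMap m hm n (algebraMap R (R ⊗[MvPolynomial σ k] MvPowerSeries σ k) r) =
      Ideal.Quotient.mk (m ^ n) (algebraMap R T r) := by
  rw [Algebra.TensorProduct.algebraMap_apply, towerMap_tmul]
  simp

theorem towerMap_eq_mk_of_le {n N : ℕ} (hn : n ≤ N)
    {z : R ⊗[MvPolynomial σ k] MvPowerSeries σ k} {y : T}
    (h : towerMap m hm N z = Ideal.Quotient.mk (m ^ N) y) :
    towerMap m hm n z = Ideal.Quotient.mk (m ^ n) y := by
  have key : ∀ z : R ⊗[MvPolynomial σ k] MvPowerSeries σ k,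
      Ideal.Quotient.factor (Ideal.pow_le_pow_right hn) (towerMap m hm N z) =
      towerMap m hm n z := by
    intro z
    induction z with
    | zero => simp
    | add x y hx hy => rw [map_add, map_add, hx, hy, map_add]
    | tmul r c =>
      rw [towerMap_tmul, towerMap_tmul, map_mul, powerSeriesModPow_apply,
        Ideal.Quotient.factor_mk, Ideal.Quotient.factor_mk]
      congr 1
      symm
      refine powerSeriesModPow_eq_mk m hm fun μ hμ => ?_
      rw [MvPowerSeries.coeff_truncTotal _ (hμ.trans_le hn)]
  rw [← key, h, Ideal.Quotient.factor_mk]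

variable (R m hm) in
/-- The elements of `R ⊗ k⟦x⟧` that vanish in the `m`-adic completion of `T`. -/
noncomputable def towerKer : Ideal (R ⊗[MvPolynomial σ k] MvPowerSeries σ k) :=
  ⨅ n, RingHom.ker (towerMap (R := R) m hm n)

theorem mem_towerKer {z : R ⊗[MvPolynomial σ k] MvPowerSeries σ k} :
    z ∈ towerKer R m hm ↔ ∀ n, towerMap m hm n z = 0 := by
  simp [towerKer, RingHom.mem_ker]

/-- A nonzero element of `T` is a nonzerodivisor on the completion of `T`. -/
theorem mem_towerKer_of_mul [IsDomain T] [IsNoetherianRing T] {τ : T} (hτ : τ ≠ 0)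
    {z : R ⊗[MvPolynomial σ k] MvPowerSeries σ k}
    (h : ∀ n, Ideal.Quotient.mk (m ^ n) τ * towerMap m hm n z = 0) :
    z ∈ towerKer R m hm := by
  obtain ⟨c, hc⟩ := exists_forall_mem_pow_of_mul_mem m hτ
  rw [mem_towerKer]
  intro n
  obtain ⟨y, hy⟩ := Ideal.Quotient.mk_surjective (towerMap m hm (n + c) z)
  have h1 := h (n + c)
  rw [← hy, ← map_mul, Ideal.Quotient.eq_zero_iff_mem] at h1
  rw [towerMap_eq_mk_of_le (Nat.le_add_right n c) hy.symm, Ideal.Quotient.eq_zero_iff_mem]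
  exact hc n y h1

/-- Up to the denominators `τ` and `h`, the derivation `δ'` of `R ⊗ k⟦x⟧` is compatible with a
derivation `d` of `T` through the maps `R ⊗ k⟦x⟧ → T / mⁿ`, at the cost of one power of `m`. -/
theorem mk_mul_towerMap_derivation {i : σ} {h : R} {δ : Derivation ℤ R R}
    {δ' : Derivation ℤ (R ⊗[MvPolynomial σ k] MvPowerSeries σ k)
        (R ⊗[MvPolynomial σ k] MvPowerSeries σ k)}
    (hδ' : ∀ r c, δ' (r ⊗ₜ c) = δ r ⊗ₜ c + (h * r) ⊗ₜ MvPowerSeries.pderiv k i c)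
    {d : Derivation ℤ T T} {τ : T}
    (hd : ∀ q : MvPolynomial σ k, d (algebraMap _ T q) =
      τ * algebraMap _ T (MvPolynomial.pderiv i q))
    (hdδ : ∀ r, algebraMap R T h * d (algebraMap R T r) = τ * algebraMap R T (δ r))
    (n : ℕ) (z : R ⊗[MvPolynomial σ k] MvPowerSeries σ k) :
    ∀ y : T, towerMap m hm (n + 1) z = Ideal.Quotient.mk (m ^ (n + 1)) y →
      Ideal.Quotient.mk (m ^ n) τ * towerMap m hm n (δ' z) =
        Ideal.Quotient.mk (m ^ n) (algebraMap R T h * d y) := by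
  -- it suffices to treat one lift `y`, as `d` maps `m ^ (n + 1)` into `m ^ n`
  have hlift : ∀ y y' : T, Ideal.Quotient.mk (m ^ (n + 1)) y = Ideal.Quotient.mk (m ^ (n + 1)) y' →
      Ideal.Quotient.mk (m ^ n) (algebraMap R T h * d y) =
        Ideal.Quotient.mk (m ^ n) (algebraMap R T h * d y') := by
    intro y y' hyy
    rw [Ideal.Quotient.eq] at hyy ⊢
    rw [← mul_sub, ← map_sub]
    exact Ideal.mul_mem_left _ _ (d.apply_mem_pow m n hyy)
  induction z with
  | zero =>
    intro y hy
    rw [← hlift 0 y (by rw [← hy, map_zero, map_zero])]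
    simp
  | add x x' hx hx' =>
    intro y hy
    obtain ⟨u, hu⟩ := Ideal.Quotient.mk_surjective (towerMap m hm (n + 1) x)
    obtain ⟨u', hu'⟩ := Ideal.Quotient.mk_surjective (towerMap m hm (n + 1) x')
    rw [← hlift (u + u') y (by rw [← hy, map_add, map_add, hu, hu']), map_add, map_add, mul_add,
      hx u hu.symm, hx' u' hu'.symm, map_add, mul_add, map_add]
  | tmul r c =>
    intro y hy
    set q := MvPowerSeries.truncTotal (n + 1) c with hq
    have h1 : powerSeriesModPow m hm (n + 1) c =
      Ideal.Quotient.mk (m ^ (n + 1)) (algebraMap _ T q) := rfl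
    rw [towerMap_tmul, h1, ← map_mul] at hy
    have h2 : powerSeriesModPow m hm n c = Ideal.Quotient.mk (m ^ n) (algebraMap _ T q) :=
      powerSeriesModPow_eq_mk m hm fun μ hμ => MvPowerSeries.coeff_truncTotal _ (by omega)
    have h3 : powerSeriesModPow m hm n (MvPowerSeries.pderiv k i c) =
        Ideal.Quotient.mk (m ^ n) (algebraMap _ T (MvPolynomial.pderiv i q)) := by
      refine powerSeriesModPow_eq_mk m hm fun μ hμ => ?_
      rw [MvPolynomial.coeff_pderiv, MvPowerSeries.coeff_pderiv, hq,
        MvPowerSeries.coeff_truncTotal]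
      simp only [map_add, Finsupp.degree_single]
      omega
    rw [← hlift _ _ hy, hδ', map_add, towerMap_tmul, towerMap_tmul, h2, h3, Derivation.leibniz,
      hd, smul_eq_mul, smul_eq_mul, ← map_mul, ← map_mul, ← map_add, ← map_mul]
    congr 1
    rw [map_mul]
    linear_combination (-algebraMap _ T q) * hdδ r

theorem derivation_mem_towerKer [IsDomain T] [IsNoetherianRing T]
    {i : σ} {h : R} {δ : Derivation ℤ R R}
    {δ' : Derivation ℤ (R ⊗[MvPolynomial σ k] MvPowerSeries σ k)
        (R ⊗[MvPolynomial σ k] MvPowerSeries σ k)}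
    (hδ' : ∀ r c, δ' (r ⊗ₜ c) = δ r ⊗ₜ c + (h * r) ⊗ₜ MvPowerSeries.pderiv k i c)
    {d : Derivation ℤ T T} {τ : T} (hτ : τ ≠ 0)
    (hd : ∀ q : MvPolynomial σ k, d (algebraMap _ T q) =
      τ * algebraMap _ T (MvPolynomial.pderiv i q))
    (hdδ : ∀ r, algebraMap R T h * d (algebraMap R T r) = τ * algebraMap R T (δ r))
    {z : R ⊗[MvPolynomial σ k] MvPowerSeries σ k} (hz : z ∈ towerKer R m hm) :
    δ' z ∈ towerKer R m hm := by
  refine mem_towerKer_of_mul hτ fun n => ?_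
  rw [mk_mul_towerMap_derivation hδ' hd hdδ n z 0 (by rw [mem_towerKer.mp hz, map_zero]),
    map_zero, mul_zero, map_zero]

end TowerMaps

/-! ### The kernel of the map to the completion and its annihilator -/

section Splitting

set_option linter.unusedSectionVars false

open TensorProduct

/-- In a reduced Noetherian ring, the sum of an ideal and its annihilator contains a
nonzerodivisor. -/
theorem exists_mem_sup_annihilator_nonZeroDivisors {B : Type*} [CommRing B] [IsNoetherianRing B]
    [IsReduced B] (I : Ideal B) : ∃ z ∈ I ⊔ I.annihilator, z ∈ nonZeroDivisors B := by
  by_contra! hcon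
  have hsub : ((I ⊔ I.annihilator : Ideal B) : Set B) ⊆ ⋃ p ∈ associatedPrimes B B, (p : Set B) := by
    rw [biUnion_associatedPrimes_eq_compl_nonZeroDivisors]
    exact fun z hz => hcon z hz
  obtain ⟨p, hp, hle⟩ := (Ideal.subset_union_prime_finite (associatedPrimes.finite B B) ⊤ ⊤
    (fun p hp _ _ => hp.isPrime)).mp hsub
  obtain ⟨hpp, x, rfl⟩ := (Submodule.isAssociatedPrime_iff).mp hp
  have hx : ∀ z ∈ I ⊔ I.annihilator, z * x = 0 := fun z hz => by
    have := hle hz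
    simpa [Submodule.mem_colon_singleton] using this
  have hx1 : x ∈ I.annihilator := Submodule.mem_annihilator.mpr fun y hy => by
    rw [smul_eq_mul, mul_comm]
    exact hx y (Ideal.mem_sup_left hy)
  have hx2 : x * x = 0 := hx x (Ideal.mem_sup_right hx1)
  have hx0 : x = 0 := by
    have : IsNilpotent x := ⟨2, by rw [pow_two, hx2]⟩
    exact this.eq_zero
  subst hx0
  apply hpp.ne_top
  rw [Ideal.eq_top_iff_one]
  simp [Submodule.mem_colon_singleton]

theorem derivation_mem_sup_annihilator {B : Type*} [CommRing B] {I : Ideal B}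
    {δ : Derivation ℤ B B} (h : ∀ z ∈ I, δ z ∈ I) {z : B} (hz : z ∈ I ⊔ I.annihilator) :
    δ z ∈ I ⊔ I.annihilator := by
  obtain ⟨x, hx, y, hy, rfl⟩ := Submodule.mem_sup.mp hz
  rw [map_add]
  refine Ideal.add_mem _ (Ideal.mem_sup_left (h x hx)) (Ideal.mem_sup_right ?_)
  rw [Submodule.mem_annihilator] at hy ⊢
  intro w hw
  have h1 := congrArg δ (hy w hw)
  rw [smul_eq_mul, Derivation.leibniz, map_zero, smul_eq_mul, smul_eq_mul] at h1
  have h2 := hy _ (h w hw)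
  rw [smul_eq_mul] at h2 ⊢
  rw [h2, zero_add, mul_comm] at h1
  exact h1

/-- The power series ring in characteristic zero has no proper nonzero ideal stable under all
partial derivatives. -/
theorem eq_top_of_pderiv_stable {k σ : Type*} [Field k] [CharZero k]
    (X : Ideal (MvPowerSeries σ k)) (hX : ∀ i, ∀ c ∈ X, MvPowerSeries.pderiv k i c ∈ X)
    {c : MvPowerSeries σ k} (hc : c ∈ X) (hc0 : c ≠ 0) : X = ⊤ := by
  obtain ⟨μ, hμ⟩ : ∃ μ, MvPowerSeries.coeff μ c ≠ 0 := by
    by_contra! h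
    exact hc0 (MvPowerSeries.ext fun μ => by rw [h μ, map_zero])
  clear hc0
  induction hn : μ.degree generalizing μ c with
  | zero =>
    have h0 : μ = 0 := (Finsupp.degree_eq_zero_iff μ).mp hn
    subst h0
    refine Ideal.eq_top_of_isUnit_mem _ hc (MvPowerSeries.isUnit_iff_constantCoeff.mpr ?_)
    exact IsUnit.mk0 _ (by simpa using hμ)
  | succ n ih =>
    obtain ⟨i, hi⟩ : ∃ i, μ i ≠ 0 := by
      by_contra! h
      have : μ = 0 := by ext i; simp [h i]
      simp [this] at hn
    have hadd : μ - Finsupp.single i 1 + Finsupp.single i 1 = μ :=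
      tsub_add_cancel_of_le (by simpa [Nat.one_le_iff_ne_zero] using hi)
    refine ih (hX i c hc) (μ - Finsupp.single i 1) ?_ ?_
    · rw [MvPowerSeries.coeff_pderiv, hadd]
      exact mul_ne_zero hμ (Nat.cast_add_one_ne_zero _)
    · have := congrArg Finsupp.degree hadd
      rw [map_add, hn, Finsupp.degree_single] at this
      omega

theorem exists_derivation_of_mem_derDenom {R M : Type*} [CommRing R] [Field M] [Algebra R M]
    [FaithfulSMul R M] {D : Derivation ℤ M M} {h : R} (hh : h ∈ derDenom R D) :
    ∃ δ : Derivation ℤ R R, ∀ r, algebraMap R M (δ r) =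
      algebraMap R M h * D (algebraMap R M r) := by
  have hinj := FaithfulSMul.algebraMap_injective R M
  choose f hf using hh
  let g : R →+ R := AddMonoidHom.mk' f fun a b => by
    apply hinj
    rw [hf, map_add, map_add, map_add, hf, hf, mul_add]
  refine ⟨Derivation.mk' g.toIntLinearMap fun a b => ?_, hf⟩
  change f (a * b) = a * f b + b * f a
  apply hinj
  simp only [map_add, map_mul, hf, Derivation.leibniz, smul_eq_mul]
  ring

variable {k : Type*} [Field k] [CharZero k] {σ : Type*} [Finite σ]
  {R : Type*} [CommRing R] [IsDomain R] [Algebra (MvPolynomial σ k) R]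
  [Module.Finite (MvPolynomial σ k) R] [FaithfulSMul (MvPolynomial σ k) R]
  {T : Type*} [CommRing T] [IsDomain T] [IsNoetherianRing T] [Algebra (MvPolynomial σ k) T]
  [Algebra R T] [IsScalarTower (MvPolynomial σ k) R T] [FaithfulSMul R T]
  {M : Type*} [Field M] [Algebra R M] [Algebra T M] [FaithfulSMul T M] [IsScalarTower R T M]
  {D : σ → Derivation ℤ M M}
  {m : Ideal T} {hm : ∀ i, algebraMap (MvPolynomial σ k) T (MvPolynomial.X i) ∈ m}

variable (R m hm) in
/-- The ideal generated by the elements vanishing in the completion of `T` and their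
annihilator: it measures the failure of the image of `Spec` of that completion to be a union of
connected components. -/
noncomputable def splitIdeal : Ideal (R ⊗[MvPolynomial σ k] MvPowerSeries σ k) :=
  towerKer R m hm ⊔ (towerKer R m hm).annihilator

theorem exists_derivation_splitIdeal {i : σ} {D : Derivation ℤ M M}
    (hD : ExtendsPDeriv k R i D) {τ : T} (hτ : τ ≠ 0) (hτD : τ ∈ derDenom T D)
    {h : R} (hh : h ∈ derDenom R D) :
    ∃ δ : Derivation ℤ R R, (∀ r, algebraMap R M (δ r) =
        algebraMap R M h * D (algebraMap R M r)) ∧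
      ∃ δ' : Derivation ℤ (R ⊗[MvPolynomial σ k] MvPowerSeries σ k)
        (R ⊗[MvPolynomial σ k] MvPowerSeries σ k),
        (∀ r c, δ' (r ⊗ₜ c) = δ r ⊗ₜ c + (h * r) ⊗ₜ MvPowerSeries.pderiv k i c) ∧
        ∀ z ∈ splitIdeal R m hm, δ' z ∈ splitIdeal R m hm := by
  have hinjT := FaithfulSMul.algebraMap_injective T M
  have : FaithfulSMul R M := by
    rw [faithfulSMul_iff_algebraMap_injective, IsScalarTower.algebraMap_eq R T M]
    exact hinjT.comp (FaithfulSMul.algebraMap_injective R T)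
  have hinjR := FaithfulSMul.algebraMap_injective R M
  obtain ⟨δ, hδ⟩ := exists_derivation_of_mem_derDenom hh
  obtain ⟨d, hd⟩ := exists_derivation_of_mem_derDenom hτD
  have hRT : ∀ r : R, algebraMap T M (algebraMap R T r) = algebraMap R M r := fun r =>
    (IsScalarTower.algebraMap_apply R T M r).symm
  obtain ⟨δ', hδ'⟩ := exists_derivation_tensor (k := k) i h δ (fun q => hinjR (by
    rw [hδ, hD, map_mul]))
  refine ⟨δ, hδ, δ', hδ', fun z hz => derivation_mem_sup_annihilator (fun w hw => ?_) hz⟩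
  refine derivation_mem_towerKer hδ' (d := d) hτ (fun q => hinjT ?_) (fun r => hinjT ?_) hw
  · rw [hd, IsScalarTower.algebraMap_apply _ R T q, hRT, hD, map_mul,
      IsScalarTower.algebraMap_apply _ R T, hRT]
  · rw [map_mul, hd, hRT, hRT, map_mul, hRT, hδ]
    ring

/-- `splitIdeal` contains a nonzerodivisor, hence a nonzero power series.  Once a common
denominator `h` of the partial derivatives is inverted, the ideal of such power series is stable
under these, hence contains `1`; so `splitIdeal` contains a power of `h`. -/
theorem comap_splitIdeal_ne_bot (hD : ∀ i, ExtendsPDeriv k R i (D i))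
    (hτ : ∀ i, ∃ τ : T, τ ≠ 0 ∧ τ ∈ derDenom T (D i)) :
    (splitIdeal R m hm).comap (algebraMap R (R ⊗[MvPolynomial σ k] MvPowerSeries σ k)) ≠ ⊥ := by
  classical
  have hinjT := FaithfulSMul.algebraMap_injective T M
  have : FaithfulSMul R M := by
    rw [faithfulSMul_iff_algebraMap_injective, IsScalarTower.algebraMap_eq R T M]
    exact hinjT.comp (FaithfulSMul.algebraMap_injective R T)
  have := isNoetherianRing_tensor_mvPowerSeries (k := k) (σ := σ) (R := R)
  have := isReduced_tensor_mvPowerSeries (k := k) (σ := σ) (R := R)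
  obtain ⟨z, hz, hznd⟩ := exists_mem_sup_annihilator_nonZeroDivisors (towerKer R m hm)
  let ι : MvPowerSeries σ k →ₐ[MvPolynomial σ k] R ⊗[MvPolynomial σ k] MvPowerSeries σ k :=
    Algebra.TensorProduct.includeRight
  obtain ⟨c, hc, hc0⟩ : ∃ c, ι c ∈ splitIdeal R m hm ∧ c ≠ 0 := by
    let e := Algebra.TensorProduct.comm (MvPolynomial σ k) R (MvPowerSeries σ k)
    obtain ⟨p, hp, hpz⟩ := Algebra.IsIntegral.isIntegral (R := MvPowerSeries σ k) (e z)
    have h1 : p.eval₂ (ι : MvPowerSeries σ k →+* _) z = 0 := by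
      have h2 := congrArg e.symm hpz
      rw [map_zero] at h2
      have h3 := Polynomial.hom_eval₂ p (algebraMap (MvPowerSeries σ k)
        (MvPowerSeries σ k ⊗[MvPolynomial σ k] R)) e.symm.toAlgHom.toRingHom (e z)
      have h4 : e.symm.toAlgHom.toRingHom (e z) = z := e.symm_apply_apply z
      rw [h4] at h3
      exact h3.symm.trans h2
    obtain ⟨n, hn0, hn⟩ := Ideal.exists_coeff_ne_zero_mem_comap_of_non_zero_divisor_root_mem
      (fun {x} hx => (mul_right_mem_nonZeroDivisors_eq_zero_iff hznd).mp hx) hz hp.ne_zero h1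
    exact ⟨_, hn, hn0⟩
  -- a common denominator of all the partial derivatives
  have := Fintype.ofFinite σ
  choose η hη0 hη using fun i => (hD i).exists_mem_derDenom
  let h : R := ∏ i, algebraMap (MvPolynomial σ k) R (η i)
  have hh : ∀ i, h ∈ derDenom R (D i) := fun i =>
    (derDenom R (D i)).mem_of_dvd (Finset.dvd_prod_of_mem _ (Finset.mem_univ i)) (hη i)
  have hh0 : h ≠ 0 := Finset.prod_ne_zero_iff.mpr fun i _ => by
    simpa using (FaithfulSMul.algebraMap_injective (MvPolynomial σ k) R).ne (hη0 i)
  let X : Ideal (MvPowerSeries σ k) :=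
    { carrier := {c | ∃ N : ℕ, (h ^ N) ⊗ₜ c ∈ splitIdeal R m hm}
      zero_mem' := ⟨0, by simp⟩
      add_mem' := by
        rintro a b ⟨N, ha⟩ ⟨N', hb⟩
        refine ⟨N + N', ?_⟩
        rw [tmul_add]
        refine Ideal.add_mem _ ?_ ?_
        · have := Ideal.mul_mem_left _ ((h ^ N') ⊗ₜ (1 : MvPowerSeries σ k)) ha
          rwa [Algebra.TensorProduct.tmul_mul_tmul, one_mul, ← pow_add, add_comm] at this
        · have := Ideal.mul_mem_left _ ((h ^ N) ⊗ₜ (1 : MvPowerSeries σ k)) hb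
          rwa [Algebra.TensorProduct.tmul_mul_tmul, one_mul, ← pow_add] at this
      smul_mem' := by
        rintro a b ⟨N, hb⟩
        refine ⟨N, ?_⟩
        have := Ideal.mul_mem_left _ ((1 : R) ⊗ₜ a) hb
        rwa [Algebra.TensorProduct.tmul_mul_tmul, one_mul] at this }
  have hXc : c ∈ X := ⟨0, by rw [pow_zero]; exact hc⟩
  have hX : X = ⊤ := by
    refine eq_top_of_pderiv_stable X (fun i c hc => ?_) hXc hc0
    obtain ⟨N, hN⟩ := hc
    obtain ⟨τ, hτ0, hτ⟩ := hτ i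
    obtain ⟨δ, -, δ', hδ', hs⟩ := exists_derivation_splitIdeal (m := m) (hm := hm) (hD i) hτ0 hτ
      (hh i)
    refine ⟨N + 2, ?_⟩
    have h1 := Ideal.mul_mem_left _ (h ⊗ₜ (1 : MvPowerSeries σ k)) (hs _ hN)
    have h2 := Ideal.mul_mem_left _ (((N : R) * δ h) ⊗ₜ (1 : MvPowerSeries σ k)) hN
    have h3 : h ⊗ₜ[MvPolynomial σ k] (1 : MvPowerSeries σ k) * δ' ((h ^ N) ⊗ₜ c) =
        ((N : R) * δ h) ⊗ₜ (1 : MvPowerSeries σ k) * ((h ^ N) ⊗ₜ c) +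
          (h ^ (N + 2)) ⊗ₜ MvPowerSeries.pderiv k i c := by
      rw [hδ', mul_add]
      simp only [Algebra.TensorProduct.tmul_mul_tmul, one_mul]
      congr 2
      · rw [Derivation.leibniz_pow, nsmul_eq_mul, smul_eq_mul]
        rcases N with - | N
        · simp
        · rw [Nat.add_sub_cancel]; ring
      · ring
    rw [h3] at h1
    exact (Ideal.add_mem_iff_right _ h2).mp h1
  obtain ⟨N, hN⟩ : (1 : MvPowerSeries σ k) ∈ X := hX ▸ Submodule.mem_top
  exact (Submodule.ne_bot_iff _).mpr ⟨h ^ N, hN, pow_ne_zero _ hh0⟩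

end Splitting

/-! ### Fractions that are formally defined -/

section FormalCore

set_option linter.unusedSectionVars false

open TensorProduct

/-- Ideals of denominators commute with flat base change. -/
theorem mem_map_denom_of_flat {R B : Type*} [CommRing R] [CommRing B] [Algebra R B]
    [Module.Flat R B] {b α : R} {x e : B} (h : algebraMap R B b * x = algebraMap R B α * e) :
    e ∈ (denom b α).map (algebraMap R B) := by
  have h0 : ∑ i : Fin 2, (![b, -α] i) • (![x, e] i) = 0 := by
    simp [Fin.sum_univ_two, Algebra.smul_def, h]
  obtain ⟨l, a, y, h1, h2⟩ := Module.Flat.isTrivialRelation_of_sum_smul_eq_zero (R := R) (M := B) h0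
  have h3 : e = ∑ j, a 1 j • y j := h1 1
  rw [h3]
  refine Ideal.sum_mem _ fun j _ => ?_
  rw [Algebra.smul_def]
  refine Ideal.mul_mem_right _ _ (Ideal.mem_map_of_mem _ (mem_denom.mpr ⟨a 0 j, ?_⟩))
  have h4 := h2 j
  simp only [Fin.sum_univ_two, Matrix.cons_val_zero, Matrix.cons_val_one] at h4
  linear_combination -h4

/-- Prime avoidance: an ideal in no associated prime of `R / s₀` contains a nonzerodivisor
modulo `s₀`. -/
theorem exists_mem_forall_dvd_of_not_le {R : Type*} [CommRing R] [IsNoetherianRing R]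
    {J : Ideal R} {s₀ : R} (hJ : ∀ β, (denom s₀ β).IsPrime → ¬ J ≤ denom s₀ β) :
    ∃ t ∈ J, ∀ x, s₀ ∣ x * t → s₀ ∣ x := by
  by_contra! hcon
  have hsub : (J : Set R) ⊆ ⋃ p ∈ associatedPrimes R (R ⧸ Ideal.span {s₀}), (p : Set R) := by
    rw [biUnion_associatedPrimes_eq_zero_divisors]
    intro t ht
    obtain ⟨x, hx, hx'⟩ := hcon t ht
    refine ⟨Ideal.Quotient.mk _ x, ?_, ?_⟩
    · rwa [Ne, Ideal.Quotient.eq_zero_iff_mem, Ideal.mem_span_singleton]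
    · rw [Algebra.smul_def, Ideal.Quotient.algebraMap_eq, ← map_mul, mul_comm,
        Ideal.Quotient.eq_zero_iff_mem, Ideal.mem_span_singleton]
      exact hx
  obtain ⟨p, hp, hle⟩ := (Ideal.subset_union_prime_finite
    (associatedPrimes.finite R (R ⧸ Ideal.span {s₀})) ⊤ ⊤ (fun p hp _ _ => hp.isPrime)).mp hsub
  obtain ⟨hpp, x, hx⟩ := (Submodule.isAssociatedPrime_iff).mp hp
  obtain ⟨β, rfl⟩ := Ideal.Quotient.mk_surjective x
  have hpβ : p = denom s₀ β := by
    ext r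
    rw [hx, Submodule.mem_colon_singleton, mem_denom, Submodule.mem_bot, Algebra.smul_def,
      Ideal.Quotient.algebraMap_eq, ← map_mul, Ideal.Quotient.eq_zero_iff_mem,
      Ideal.mem_span_singleton]
  subst hpβ
  exact hJ β hpp hle

variable {k : Type*} [Field k] [CharZero k] {σ : Type*} [Finite σ]
  {R : Type*} [CommRing R] [IsDomain R] [Algebra (MvPolynomial σ k) R]
  [Module.Finite (MvPolynomial σ k) R] [FaithfulSMul (MvPolynomial σ k) R]
  {T : Type*} [CommRing T] [IsDomain T] [IsNoetherianRing T] [Algebra (MvPolynomial σ k) T]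
  [Algebra R T] [IsScalarTower (MvPolynomial σ k) R T] [FaithfulSMul R T]
  {M : Type*} [Field M] [Algebra R M] [Algebra T M] [FaithfulSMul T M] [IsScalarTower R T M]
  {D : σ → Derivation ℤ M M}
  {m : Ideal T} {hm : ∀ i, algebraMap (MvPolynomial σ k) T (MvPolynomial.X i) ∈ m}

/-- The completion of `T` lives over a union of connected components of `R ⊗ k⟦x⟧`: there is an
element `e` mapping to `1` in the completion and annihilating the kernel of the map to it.  Let
`s₀` and `t` in `R ∩ splitIdeal` be such that `s₀ ≠ 0` and `t` is a nonzerodivisor modulo `s₀`, and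
let `εs`, `εt` be their components in the annihilator of the kernel.  Then `s₀ εt = t εs`, so `εs`
is divisible by `s₀`, with quotient `e`. -/
theorem exists_split_element [IsIntegrallyClosed R] (hD : ∀ i, ExtendsPDeriv k R i (D i))
    (hτ : ∀ i, ∃ τ : T, τ ≠ 0 ∧ τ ∈ derDenom T (D i)) :
    ∃ e : R ⊗[MvPolynomial σ k] MvPowerSeries σ k,
      e - 1 ∈ towerKer R m hm ∧ ∀ z ∈ towerKer R m hm, e * z = 0 := by
  have hinjT := FaithfulSMul.algebraMap_injective T M
  have hinjRT := FaithfulSMul.algebraMap_injective R T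
  have : FaithfulSMul R M := by
    rw [faithfulSMul_iff_algebraMap_injective, IsScalarTower.algebraMap_eq R T M]
    exact hinjT.comp hinjRT
  have := isReduced_tensor_mvPowerSeries (k := k) (σ := σ) (R := R)
  have := flat_mvPowerSeries (k := k) (σ := σ)
  have : IsNoetherianRing R := IsNoetherianRing.of_finite (MvPolynomial σ k) R
  let ι := algebraMap R (R ⊗[MvPolynomial σ k] MvPowerSeries σ k)
  have hJ := comap_splitIdeal_ne_bot (R := R) (m := m) (hm := hm) hD hτ
  obtain ⟨s₀, hs₀, hs₀0⟩ := (Submodule.ne_bot_iff _).mp hJ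
  obtain ⟨t, ht, htd⟩ := exists_mem_forall_dvd_of_not_le
      (J := (splitIdeal R m hm).comap ι) (s₀ := s₀) fun β hβ => by
    obtain ⟨a, t, hat⟩ := exists_isLocallyGenBy (β := β) hs₀0
    refine not_le_of_derivation_stable hD (fun hbot => hs₀0 ?_) hat hJ ?_
    · have : s₀ ∈ denom s₀ β := mem_denom.mpr (dvd_mul_right _ _)
      rwa [hbot] at this
    · intro i h hh z hz z' hz'
      obtain ⟨τ, hτ0, hτ⟩ := hτ i
      obtain ⟨δ, hδ, δ', hδ', hs⟩ := exists_derivation_splitIdeal (m := m) (hm := hm)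
        (hD i) hτ0 hτ hh
      have h1 := hs _ (Ideal.mem_comap.mp hz)
      have h2 : z' = δ z := FaithfulSMul.algebraMap_injective R M (by rw [hδ, hz'])
      have h3 : δ' (ι z) = ι z' := by
        rw [h2]
        simp only [ι, Algebra.TensorProduct.algebraMap_apply, Algebra.algebraMap_self,
          RingHom.id_apply]
        rw [hδ', Derivation.map_one_eq_zero, tmul_zero, add_zero]
      rw [Ideal.mem_comap, ← h3]
      exact h1
  obtain ⟨z, hz, εs, hεs, hzs⟩ := Submodule.mem_sup.mp (Ideal.mem_comap.mp hs₀)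
  obtain ⟨z', hz', εt, hεt, hzt⟩ := Submodule.mem_sup.mp (Ideal.mem_comap.mp ht)
  rw [Submodule.mem_annihilator] at hεs hεt
  simp only [smul_eq_mul] at hεs hεt
  -- the difference is a combination of products of the kernel with its annihilator
  have h0 : ι s₀ * εt = ι t * εs := by
    have h1 : (ι t * εs - ι s₀ * εt) = z' * εs - z * εt := by
      change _ = ι t at hzt
      change _ = ι s₀ at hzs
      rw [← hzt, ← hzs]; ring
    have h2 : z' * εs - z * εt = 0 := by
      rw [mul_comm z', mul_comm z, hεs _ hz', hεt _ hz, sub_zero]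
    rw [h2, sub_eq_zero] at h1
    exact h1.symm
  obtain ⟨e, he⟩ : ∃ e, εs = ι s₀ * e := by
    have h1 := mem_map_denom_of_flat h0
    have h2 : denom s₀ t = Ideal.span {s₀} := by
      ext r
      rw [mem_denom, Ideal.mem_span_singleton]
      exact ⟨htd r, fun h => h.mul_right t⟩
    rw [h2, Ideal.map_span, Set.image_singleton, Ideal.mem_span_singleton] at h1
    exact h1
  have hreg : ∀ x, ι s₀ * x = 0 → x = 0 := by
    intro x hx
    have h1 : x ∈ (denom 0 s₀).map ι := mem_map_denom_of_flat (x := 0) (by rw [mul_zero]; exact hx.symm)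
    have h2 : denom 0 s₀ = ⊥ := by
      ext r
      rw [mem_denom, zero_dvd_iff, mul_eq_zero, or_iff_left hs₀0, Ideal.mem_bot]
    rwa [h2, Ideal.map_bot, Ideal.mem_bot] at h1
  refine ⟨e, ?_, fun w hw => hreg _ ?_⟩
  · refine mem_towerKer_of_mul (τ := algebraMap R T s₀) (by simpa using hinjRT.ne hs₀0) fun n => ?_
    rw [← towerMap_algebraMap (hm := hm), ← map_mul, mul_sub, mul_one]
    change towerMap m hm n (ι s₀ * e - ι s₀) = 0
    change _ = ι s₀ at hzs
    rw [← he, ← hzs, sub_add_cancel_right, map_neg, mem_towerKer.mp hz, neg_zero]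
  · rw [← mul_assoc, ← he, hεs _ hw]

/-- A fraction `α / b` of `R` lying in `T`, whose image in the completion of `T` comes from
`R ⊗ k⟦x⟧`, lies in the localization of `R` at the contraction of `m`. -/
theorem exists_mem_denom_of_formal [IsIntegrallyClosed R] (hD : ∀ i, ExtendsPDeriv k R i (D i))
    (hτ : ∀ i, ∃ τ : T, τ ≠ 0 ∧ τ ∈ derDenom T (D i)) (hm1 : m ≠ ⊤) {b α : R}
    {s : T} (hs : algebraMap R T b * s = algebraMap R T α)
    {a : R ⊗[MvPolynomial σ k] MvPowerSeries σ k}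
    (ha : ∀ n, towerMap m hm n a = Ideal.Quotient.mk (m ^ n) s) :
    ∃ t ∈ denom b α, algebraMap R T t ∉ m := by
  have := flat_mvPowerSeries (k := k) (σ := σ)
  obtain ⟨e, he1, he⟩ := exists_split_element (R := R) (m := m) (hm := hm) hD hτ
  let ι := algebraMap R (R ⊗[MvPolynomial σ k] MvPowerSeries σ k)
  have h1 : ι b * a - ι α ∈ towerKer R m hm := mem_towerKer.mpr fun n => by
    rw [map_sub, map_mul, towerMap_algebraMap, towerMap_algebraMap, ha, ← map_mul, hs, sub_self]
  have h2 : ι b * (e * a) = ι α * e := by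
    linear_combination he _ h1
  have h3 : e ∈ (denom b α).map ι := mem_map_denom_of_flat h2
  by_contra! hcon
  have h4 : (denom b α).map ι ≤ RingHom.ker (towerMap (R := R) m hm 1) := by
    rw [Ideal.map_le_iff_le_comap]
    intro r hr
    rw [Ideal.mem_comap, RingHom.mem_ker, towerMap_algebraMap, Ideal.Quotient.eq_zero_iff_mem,
      pow_one]
    exact hcon r hr
  have h5 : towerMap m hm 1 e = 0 := h4 h3
  have h6 := mem_towerKer.mp he1 1
  rw [map_sub, h5, map_one, zero_sub, neg_eq_zero] at h6
  apply hm1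
  rw [Ideal.eq_top_iff_one, ← pow_one m, ← Ideal.Quotient.eq_zero_iff_mem, map_one]
  exact h6

end FormalCore

/-! ### Birationality -/

section Birational

open TensorProduct

/-- In a noetherian ring an ideal `I` with `e I ⊆ I` for an automorphism `e` satisfies
`e⁻¹ I = I`, since the chain `I ≤ e⁻¹ I ≤ e⁻² I ≤ ⋯` stabilises. -/
theorem Ideal.comap_eq_of_le_comap {A : Type*} [CommRing A] [IsNoetherianRing A] (e : A ≃+* A)
    {I : Ideal A} (h : I ≤ I.comap e) : I.comap e = I := by
  let c : ℕ → Ideal A := fun n => (fun J : Ideal A => J.comap e)^[n] I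
  have hc : ∀ n, c (n + 1) = (c n).comap e := fun n => by
    simp only [c, Function.iterate_succ_apply']
  have hmono : Monotone c := by
    apply monotone_nat_of_le_succ
    intro n
    induction n with
    | zero => exact h
    | succ n ih =>
      rw [hc (n + 1)]
      conv_lhs => rw [hc n]
      exact Ideal.comap_mono ih
  obtain ⟨N, hN⟩ := monotone_stabilizes_iff_noetherian.2 ‹IsNoetherianRing A› ⟨c, hmono⟩
  have key : ∀ n, c n = c (n + 1) → c 0 = c 1 := by
    intro n
    induction n with
    | zero => exact id
    | succ n ih =>
      intro hn
      apply ih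
      rw [hc (n + 1)] at hn
      conv_lhs at hn => rw [hc n]
      exact Ideal.comap_injective_of_surjective _ e.surjective hn
  exact (key N (hN (N + 1) (Nat.le_succ N))).symm

/-- The ideal of `S ⊗ S` generated by all `r ⊗ 1 - 1 ⊗ r` with `r` in the subalgebra `R` is stable
under `Φ ⊗ Φ`, hence invariant; so `s ⊗ 1 = 1 ⊗ s` in `S ⊗[R] S` whenever `Φ s ∈ R`. Applying a
functional on the first factor shows that `s` is a fraction of elements of `R`. -/
theorem exists_mul_mem_of_apply_mem {k S : Type*} [Field k] [CommRing S] [IsDomain S]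
    [Algebra k S] [Algebra.EssFiniteType k S] (R : Subalgebra k S) (Φ : S ≃ₐ[k] S)
    (hΦ : ∀ r ∈ R, Φ r ∈ R) {s : S} (hs : Φ s ∈ R) :
    ∃ b ∈ R, b ≠ 0 ∧ b * s ∈ R := by
  have : Algebra.EssFiniteType k (S ⊗[k] S) := Algebra.EssFiniteType.comp k S _
  have : IsNoetherianRing (S ⊗[k] S) := Algebra.EssFiniteType.isNoetherianRing k _
  let d : S → S ⊗[k] S := fun r => r ⊗ₜ 1 - 1 ⊗ₜ r
  let I : Ideal (S ⊗[k] S) := Ideal.span (d '' (R : Set S))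
  let Θ : S ⊗[k] S ≃ₐ[k] S ⊗[k] S := Algebra.TensorProduct.congr Φ Φ
  have hΘ : ∀ r, Θ (d r) = d (Φ r) := fun r => by simp [Θ, d]
  have hI : I.comap (Θ : S ⊗[k] S ≃+* S ⊗[k] S) = I := by
    apply Ideal.comap_eq_of_le_comap
    rw [Ideal.span_le]
    rintro _ ⟨r, hr, rfl⟩
    change Θ (d r) ∈ I
    rw [hΘ]
    exact Ideal.subset_span ⟨_, hΦ r hr, rfl⟩
  have hsI : d s ∈ I := by
    rw [← hI]
    change Θ (d s) ∈ I
    rw [hΘ]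
    exact Ideal.subset_span ⟨_, hs, rfl⟩
  let L := FractionRing S
  let K := FractionRing R
  have : FaithfulSMul R L := by
    rw [faithfulSMul_iff_algebraMap_injective, IsScalarTower.algebraMap_eq R S L]
    exact (IsFractionRing.injective S L).comp Subtype.val_injective
  let _ : Algebra K L := FractionRing.liftAlgebra R L
  obtain ⟨l, hl⟩ := LinearMap.exists_leftInverse_of_injective (Algebra.linearMap K L)
    (LinearMap.ker_eq_bot.2 (algebraMap K L).injective)
  have hl1 : l 1 = 1 := by
    have := LinearMap.congr_fun hl 1
    simpa using this
  have hlR : ∀ (r : R) (x : L), algebraMap K L (l (algebraMap R L r * x)) =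
      algebraMap R L r * algebraMap K L (l x) := by
    intro r x
    rw [IsScalarTower.algebraMap_apply R K L, ← Algebra.smul_def, map_smul, smul_eq_mul, map_mul]
  let Λ : S ⊗[k] S →ₗ[k] L := TensorProduct.lift
    (LinearMap.mk₂ k (fun x y => algebraMap K L (l (algebraMap S L x)) * algebraMap S L y)
      (fun x x' y => by rw [map_add, map_add, RingHom.map_add, add_mul])
      (fun c x y => by
        have h1 : algebraMap S L (c • x) = algebraMap R L (algebraMap k R c) * algebraMap S L x := by
          rw [Algebra.smul_def, map_mul]; rfl
        have h2 : algebraMap R L (algebraMap k R c) = algebraMap k L c := rfl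
        rw [h1, hlR, mul_assoc, h2, ← Algebra.smul_def])
      (fun x y y' => by rw [map_add, mul_add])
      (fun c x y => by
        have h1 : algebraMap S L (c • y) = algebraMap k L c * algebraMap S L y := by
          rw [Algebra.smul_def, map_mul]; rfl
        rw [h1, Algebra.smul_def]; ring))
  have hΛ : ∀ x y, Λ (x ⊗ₜ y) = algebraMap K L (l (algebraMap S L x)) * algebraMap S L y :=
    fun x y => by simp [Λ]
  have hΛI : ∀ z ∈ I, ∀ w, Λ (w * z) = 0 := by
    intro z hz
    induction hz using Submodule.span_induction with
    | zero => simp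
    | add x y _ _ hx hy => intro w; rw [mul_add, map_add, hx, hy, add_zero]
    | smul a x _ hx => intro w; rw [smul_eq_mul, ← mul_assoc, hx]
    | mem x hx =>
      obtain ⟨r, hr, rfl⟩ := hx
      intro w
      induction w using TensorProduct.induction_on with
      | zero => simp
      | add x y hx hy => rw [add_mul, map_add, hx, hy, add_zero]
      | tmul x y =>
        have h1 : algebraMap S L (x * r) = algebraMap R L ⟨r, hr⟩ * algebraMap S L x := by
          rw [mul_comm, map_mul]; rfl
        have h2 : algebraMap S L (y * r) = algebraMap R L ⟨r, hr⟩ * algebraMap S L y := by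
          rw [mul_comm, map_mul]; rfl
        simp only [d, mul_sub, Algebra.TensorProduct.tmul_mul_tmul, mul_one, map_sub]
        rw [hΛ, hΛ, h1, h2, hlR]
        ring
  have h0 : algebraMap K L (l (algebraMap S L s)) = algebraMap S L s := by
    have := hΛI _ hsI 1
    rw [one_mul, map_sub, hΛ, hΛ, map_one, hl1, map_one] at this
    linear_combination this
  obtain ⟨⟨α, b⟩, hαb⟩ := IsLocalization.surj (nonZeroDivisors R) (l (algebraMap S L s))
  refine ⟨b.1, b.1.2, by simp, ?_⟩
  have h2 := congrArg (algebraMap K L) hαb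
  rw [map_mul, h0, ← IsScalarTower.algebraMap_apply, ← IsScalarTower.algebraMap_apply,
    IsScalarTower.algebraMap_apply R S L, IsScalarTower.algebraMap_apply R S L, ← map_mul] at h2
  have h3 := IsFractionRing.injective S L h2
  rw [mul_comm]
  change s * algebraMap R S b ∈ R
  rw [h3]
  exact α.2

end Birational

/-! ### Congruence modulo powers of the maximal ideal -/

theorem isArtinianRing_quotient_of_forall_isMaximal {A : Type*} [CommRing A] [IsNoetherianRing A]
    (J : Ideal A) (h : ∀ p : Ideal A, p.IsPrime → J ≤ p → p.IsMaximal) :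
    IsArtinianRing (A ⧸ J) := by
  rw [isArtinianRing_iff_isNoetherianRing_krullDimLE_zero]
  refine ⟨inferInstance, Ring.krullDimLE_zero_iff.2 fun q hq => ?_⟩
  have hJ : J ≤ q.comap (Ideal.Quotient.mk J) := fun x hx => by
    rw [Ideal.mem_comap, Ideal.Quotient.eq_zero_iff_mem.2 hx]
    exact q.zero_mem
  have hmax := h _ (Ideal.comap_isPrime _ q) hJ
  have hmap := Ideal.map_comap_of_surjective _ (Ideal.Quotient.mk_surjective (I := J)) q
  rw [← hmap]
  refine (Ideal.map_eq_top_or_isMaximal_of_surjective _ Ideal.Quotient.mk_surjective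
    hmax).resolve_left ?_
  rw [hmap]
  exact hq.ne_top

open IsLocalRing in
/-- Let `ρ : A → T` be a local homomorphism of local rings, equivariant for an automorphism `g` of
`T` and an endomorphism `γ` of the noetherian ring `A`. If every `x` with `g x ∈ ρ(A)` is congruent
to an element of `ρ(A)` modulo the maximal ideal, then the same holds modulo each of its powers.
On `(A ∩ m^c) / (A ∩ m^(c+1))` the images of the iterates of `γ` form a descending chain of
subspaces, so by the Artinian property `γ` is surjective there. -/
theorem exists_sub_mem_pow_of_residue {A T : Type*} [CommRing A] [CommRing T] [IsLocalRing A]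
    [IsLocalRing T] [IsNoetherianRing A] (ρ : A →+* T) [IsLocalHom ρ] (g : T ≃+* T)
    (γ : A →+* A) (hγ : ∀ a, ρ (γ a) = g (ρ a))
    (hres : ∀ x a, g x = ρ a → ∃ a', x - ρ a' ∈ maximalIdeal T) (c : ℕ) :
    ∀ x a, g x = ρ a → ∃ a', x - ρ a' ∈ maximalIdeal T ^ c := by
  set m := maximalIdeal T with hm
  have hgm : ∀ x, g x ∈ m ↔ x ∈ m := fun x => by
    simp only [hm, mem_maximalIdeal, mem_nonunits_iff, MulEquiv.isUnit_map]
  have hmap : m.map (g : T →+* T) = m := by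
    rw [Ideal.map_comap_of_equiv]
    ext x
    have := hgm (g.symm x)
    simpa using this.symm
  have hgpow : ∀ n x, g x ∈ m ^ n ↔ x ∈ m ^ n := fun n x => by
    have h1 : (m ^ n).map (g : T →+* T) = m ^ n := by rw [Ideal.map_pow, hmap]
    refine ⟨fun h => ?_, fun h => h1 ▸ Ideal.mem_map_of_mem (g : T →+* T) h⟩
    rw [← h1] at h
    obtain ⟨y, hy, hyx⟩ := (Ideal.mem_map_iff_of_surjective _ g.surjective).1 h
    exact g.injective hyx ▸ hy
  have hρm : ∀ a, ρ a ∈ m ↔ a ∈ maximalIdeal A := fun a => by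
    simp only [hm, mem_maximalIdeal, mem_nonunits_iff, isUnit_map_iff]
  have hiter : ∀ i a, ρ (γ^[i] a) = g^[i] (ρ a) := by
    intro i
    induction i with
    | zero => intro a; rfl
    | succ i ih => intro a; rw [Function.iterate_succ_apply', Function.iterate_succ_apply', hγ, ih]
  have hgpow' : ∀ n i x, g^[i] x ∈ m ^ n ↔ x ∈ m ^ n := by
    intro n i
    induction i with
    | zero => intro x; rfl
    | succ i ih => intro x; rw [Function.iterate_succ_apply', hgpow, ih]
  have hgsub : ∀ i x y, g^[i] (x - y) = g^[i] x - g^[i] y := fun i x y => by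
    exact iterate_map_sub g i x y
  -- modulo the maximal ideal every element of `A` is in the image of each iterate of `γ`
  have hsurj : ∀ i a, ∃ a', ρ (a - γ^[i] a') ∈ m := by
    intro i
    induction i with
    | zero => intro a; exact ⟨a, by simp⟩
    | succ i ih =>
      intro a
      obtain ⟨a₁, h₁⟩ := ih a
      obtain ⟨a₂, h₂⟩ := hres (g.symm (ρ a₁)) a₁ (by simp)
      refine ⟨a₂, ?_⟩
      have h₃ : g^[i + 1] (g.symm (ρ a₁) - ρ a₂) ∈ m := by
        have := (hgpow' 1 (i + 1) _).2 (by rw [pow_one]; exact h₂)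
        rwa [pow_one] at this
      rw [hgsub, Function.iterate_succ_apply, RingEquiv.apply_symm_apply, ← hiter,
        ← hiter] at h₃
      have := m.add_mem h₁ h₃
      rw [← map_sub, ← map_add] at this
      convert this using 2
      ring
  have key : ∀ n, ∀ y : A, ρ y ∈ m ^ n → ∃ y', ρ y' ∈ m ^ n ∧ ρ (y - γ y') ∈ m ^ (n + 1) := by
    intro n y hy
    let N : ℕ → Ideal A := fun i =>
      { carrier := {z | ∃ z', ρ z' ∈ m ^ n ∧ ρ (z - γ^[i] z') ∈ m ^ (n + 1)}
        zero_mem' := ⟨0, by simp, by simp [iterate_map_zero]⟩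
        add_mem' := by
          rintro a b ⟨a', ha, ha'⟩ ⟨b', hb, hb'⟩
          refine ⟨a' + b', by rw [map_add]; exact add_mem ha hb, ?_⟩
          rw [iterate_map_add]
          convert add_mem ha' hb' using 1
          rw [← map_add]
          congr 1
          ring
        smul_mem' := by
          rintro r z ⟨z', hz, hz'⟩
          obtain ⟨r', hr'⟩ := hsurj i r
          refine ⟨r' * z', by rw [map_mul]; exact Ideal.mul_mem_left _ _ hz, ?_⟩
          have h1 : ρ (γ^[i] z') ∈ m ^ n := by rw [hiter, hgpow']; exact hz
          have h2 := Ideal.mul_mem_mul h1 hr'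
          rw [← pow_succ, ← map_mul] at h2
          have h3 := add_mem ((m ^ (n + 1)).mul_mem_left (ρ r) hz') h2
          rw [← map_mul, ← map_add] at h3
          convert h3 using 2
          rw [iterate_map_mul, smul_eq_mul]
          ring }
    have hN : ∀ i, (m ^ (n + 1)).comap ρ ≤ N i := fun i z hz =>
      ⟨0, by simp, by simpa [iterate_map_zero] using hz⟩
    have hanti : Antitone N := by
      apply antitone_nat_of_succ_le
      rintro i z ⟨z', hz, hz'⟩
      exact ⟨γ z', by rwa [hγ, hgpow], by rwa [← Function.iterate_succ_apply]⟩
    have hart : IsArtinianRing (A ⧸ (m ^ (n + 1)).comap ρ) := by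
      refine isArtinianRing_quotient_of_forall_isMaximal _ fun q hq hle => ?_
      have : maximalIdeal A ≤ q := fun a ha => hq.mem_of_pow_mem (n + 1) (hle (by
        rw [Ideal.mem_comap, map_pow]
        exact Ideal.pow_mem_pow ((hρm a).2 ha) _))
      rw [← (maximalIdeal.isMaximal A).eq_of_le hq.ne_top this]
      exact maximalIdeal.isMaximal A
    obtain ⟨i, hi⟩ : ∃ i, N i = N (i + 1) := by
      obtain ⟨i, hi⟩ := IsArtinian.monotone_stabilizes (R := A ⧸ (m ^ (n + 1)).comap ρ)
        ⟨fun i => OrderDual.toDual ((N i).map (Ideal.Quotient.mk _)), fun i j hij =>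
          Ideal.map_mono (hanti hij)⟩
      refine ⟨i, ?_⟩
      have h1 : (N i).map (Ideal.Quotient.mk ((m ^ (n + 1)).comap ρ)) =
        (N (i + 1)).map (Ideal.Quotient.mk _) := hi (i + 1) (Nat.le_succ i)
      have h2 := congrArg (Ideal.comap (Ideal.Quotient.mk ((m ^ (n + 1)).comap ρ))) h1
      rwa [Ideal.comap_map_of_surjective' _ Ideal.Quotient.mk_surjective,
        Ideal.comap_map_of_surjective' _ Ideal.Quotient.mk_surjective, Ideal.mk_ker,
        sup_eq_left.2 (hN _), sup_eq_left.2 (hN _)] at h2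
    obtain ⟨y', hy', hyy'⟩ : γ^[i] y ∈ N (i + 1) := hi ▸ ⟨y, hy, by simp⟩
    refine ⟨y', hy', ?_⟩
    rw [Function.iterate_succ_apply, map_sub, hiter, hiter, ← hgsub, hgpow', ← map_sub] at hyy'
    exact hyy'
  induction c with
  | zero => intro x a _; exact ⟨a, by simp⟩
  | succ c ih =>
    intro x a hxa
    obtain ⟨a₁, h₁⟩ := ih x a hxa
    have h₂ : g (x - ρ a₁) = ρ (a - γ a₁) := by rw [map_sub, map_sub, hxa, hγ]
    obtain ⟨y, -, hy⟩ := key c (a - γ a₁) (by rw [← h₂, hgpow]; exact h₁)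
    refine ⟨a₁ + y, ?_⟩
    rw [map_sub, ← h₂, hγ, ← map_sub, hgpow] at hy
    convert hy using 1
    rw [map_add]
    ring

/-! ### Noether normalization and existence of derivations -/

section Normalization

set_option linter.unusedSectionVars false

/-- Noether normalization with all variables in a prescribed maximal ideal. -/
theorem exists_finite_injective_mem_maximal (k : Type*) {R : Type*} [Field k] [CommRing R]
    [IsDomain R] [Algebra k R] [Algebra.FiniteType k R] (Q : Ideal R) [Q.IsMaximal] :
    ∃ d : ℕ, ∃ g : MvPolynomial (Fin d) k →ₐ[k] R, Function.Injective g ∧ g.Finite ∧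
      ∀ i, g (MvPolynomial.X i) ∈ Q := by
  obtain ⟨d, g₀, hg₀, hintegral⟩ := exists_integral_inj_algHom_of_fg k R
  let _ : Field (R ⧸ Q) := Ideal.Quotient.field Q
  have : Module.Finite k (R ⧸ Q) := finite_of_finite_type_of_isJacobsonRing k (R ⧸ Q)
  let p : Fin d → Polynomial k := fun i =>
    minpoly k (Ideal.Quotient.mk Q (g₀ (MvPolynomial.X i)))
  have hpi : ∀ i, IsIntegral k (Ideal.Quotient.mk Q (g₀ (MvPolynomial.X i))) := fun i =>
    Algebra.IsIntegral.isIntegral _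
  have hX : AlgebraicIndependent k fun i => g₀ (MvPolynomial.X i) := by
    rw [AlgebraicIndependent]
    convert! hg₀
    ext i
    simp
  have hp : ∀ i, Transcendental k (p i) := fun i =>
    Polynomial.transcendental _ (minpoly.natDegree_pos (hpi i)).ne' (by
      rw [minpoly.monic (hpi i)]; exact one_mem _)
  let g : MvPolynomial (Fin d) k →ₐ[k] R :=
    MvPolynomial.aeval fun i => Polynomial.aeval (g₀ (MvPolynomial.X i)) (p i)
  have hg : Function.Injective g := hX.polynomial_aeval_of_transcendental hp
  have hgX : ∀ i, g (MvPolynomial.X i) = Polynomial.aeval (g₀ (MvPolynomial.X i)) (p i) :=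
    fun i => MvPolynomial.aeval_X _ i
  refine ⟨d, g, hg, ?_, fun i => ?_⟩
  · have hft : g.toRingHom.FiniteType := by
      refine RingHom.FiniteType.of_comp_finiteType (f := algebraMap k (MvPolynomial (Fin d) k)) ?_
      have : g.toRingHom.comp (algebraMap k (MvPolynomial (Fin d) k)) = algebraMap k R :=
        g.comp_algebraMap
      rw [this]
      exact RingHom.finiteType_algebraMap.mpr inferInstance
    refine RingHom.IsIntegral.to_finite ?_ hft
    let _ := g.toRingHom.toAlgebra
    have : IsScalarTower k (MvPolynomial (Fin d) k) R := IsScalarTower.of_algebraMap_eq'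
      g.comp_algebraMap.symm
    have hmem : ∀ q, g₀ q ∈ integralClosure (MvPolynomial (Fin d) k) R := by
      intro q
      induction q using MvPolynomial.induction_on with
      | C a =>
        rw [← MvPolynomial.algebraMap_eq, g₀.commutes,
          IsScalarTower.algebraMap_apply k (MvPolynomial (Fin d) k) R]
        exact Subalgebra.algebraMap_mem _ _
      | add p q hp hq => rw [map_add]; exact add_mem hp hq
      | mul_X q i hq =>
        rw [map_mul]
        refine mul_mem hq ?_
        have hpm : (p i).Monic := minpoly.monic (hpi i)
        have hpd : (p i).natDegree ≠ 0 := (minpoly.natDegree_pos (hpi i)).ne'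
        refine ⟨(p i).map (algebraMap k _) - Polynomial.C (MvPolynomial.X i), ?_, ?_⟩
        · refine (hpm.map _).sub_of_left (lt_of_le_of_lt Polynomial.degree_C_le ?_)
          rw [Polynomial.degree_map]
          exact Polynomial.natDegree_pos_iff_degree_pos.mp (minpoly.natDegree_pos (hpi i))
        · have h1 : algebraMap (MvPolynomial (Fin d) k) R (MvPolynomial.X i) =
            Polynomial.aeval (g₀ (MvPolynomial.X i)) (p i) := hgX i
          rw [Polynomial.eval₂_sub, Polynomial.eval₂_C, h1, Polynomial.eval₂_map,
            ← IsScalarTower.algebraMap_eq, ← Polynomial.aeval_def, sub_self]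
    intro r
    change IsIntegral (MvPolynomial (Fin d) k) r
    have h2 : IsIntegral (integralClosure (MvPolynomial (Fin d) k) R) r := by
      obtain ⟨q, hq, hqr⟩ := hintegral r
      refine ⟨q.map (g₀.toRingHom.codRestrict (integralClosure (MvPolynomial (Fin d) k) R) hmem),
        hq.map _, ?_⟩
      rw [Polynomial.eval₂_map]
      exact hqr
    exact isIntegral_trans r h2
  · rw [hgX, ← Ideal.Quotient.eq_zero_iff_mem]
    have h1 := minpoly.aeval k (Ideal.Quotient.mk Q (g₀ (MvPolynomial.X i)))
    have h2 := Polynomial.aeval_algHom_apply (Ideal.Quotient.mkₐ k Q) (g₀ (MvPolynomial.X i)) (p i)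
    exact h2.symm.trans h1

theorem exists_ringHom_lift {A M B : Type*} [CommRing A] [CommRing M] [CommRing B] [Algebra A M]
    [Algebra.FormallySmooth A M] (φ : A →+* B) (g : B →+* M) (hg : Function.Surjective g)
    (hker : IsNilpotent (RingHom.ker g)) (h : g.comp φ = algebraMap A M) :
    ∃ l : M →+* B, (∀ x, g (l x) = x) ∧ ∀ a, l (algebraMap A M a) = φ a := by
  let _ := φ.toAlgebra
  let g' : B →ₐ[A] M := { g with commutes' := fun a => RingHom.congr_fun h a }
  let l := Algebra.FormallySmooth.liftOfSurjective (AlgHom.id A M) g' hg hker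
  exact ⟨l.toRingHom, fun x => Algebra.FormallySmooth.liftOfSurjective_apply _ g' hg hker x,
    fun a => l.commutes a⟩

theorem formallySmooth_of_charZero {A M : Type*} [CommRing A] [IsDomain A] [CharZero A] [Field M]
    [Algebra A M] [FaithfulSMul A M] : Algebra.FormallySmooth A M := by
  let K := FractionRing A
  let _ : Algebra K M := FractionRing.liftAlgebra A M
  have : IsScalarTower A K M := FractionRing.isScalarTower_liftAlgebra A M
  have : CharZero K := charZero_of_injective_algebraMap (IsFractionRing.injective A K)
  have : Algebra.FormallySmooth A K := Algebra.FormallySmooth.of_isLocalization (nonZeroDivisors A)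
  have : Algebra.FormallySmooth K M := by
    obtain ⟨s, hs⟩ := exists_isTranscendenceBasis K M
    have := hs.isAlgebraic_field
    exact Algebra.FormallySmooth.of_algebraicIndependent_of_isSeparable hs.1
  exact Algebra.FormallySmooth.comp A K M

/-- A field of characteristic zero is formally smooth over the polynomial ring, so
`q ↦ q + ε ∂ᵢ q` extends to it with values in the dual numbers. -/
theorem exists_extendsPDeriv {k σ R M : Type*} [Field k] [CharZero k] [CommRing R]
    [Algebra (MvPolynomial σ k) R] [FaithfulSMul (MvPolynomial σ k) R] [Field M] [Algebra R M]
    [FaithfulSMul R M] (i : σ) : ∃ D : Derivation ℤ M M, ExtendsPDeriv k R i D := by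
  let j : MvPolynomial σ k →+* M := (algebraMap R M).comp (algebraMap _ R)
  have hj : Function.Injective j := (FaithfulSMul.algebraMap_injective R M).comp
    (FaithfulSMul.algebraMap_injective _ R)
  let _ := j.toAlgebra
  have : FaithfulSMul (MvPolynomial σ k) M := by
    rwa [faithfulSMul_iff_algebraMap_injective]
  have := formallySmooth_of_charZero (A := MvPolynomial σ k) (M := M)
  let φ : MvPolynomial σ k →+* TrivSqZeroExt M M :=
    { toFun := fun q => TrivSqZeroExt.inl (j q) + TrivSqZeroExt.inr (j (MvPolynomial.pderiv i q))
      map_one' := by ext <;> simp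
      map_zero' := by ext <;> simp
      map_add' := fun p q => by ext <;> simp
      map_mul' := fun p q => by ext <;> simp [mul_comm] }
  let g : TrivSqZeroExt M M →+* M := (TrivSqZeroExt.fstHom M M M).toRingHom
  obtain ⟨l, hl1, hl2⟩ := exists_ringHom_lift φ g (fun x => ⟨TrivSqZeroExt.inl x, rfl⟩)
    ⟨2, TrivSqZeroExt.kerIdeal_sq M M⟩ (by ext q <;> simp [g, φ] <;> rfl)
  have hl1' : ∀ x, (l x).fst = x := hl1
  let D₀ : M →+ M := AddMonoidHom.mk' (fun x => (l x).snd) fun a b => by simp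
  refine ⟨Derivation.mk' D₀.toIntLinearMap fun a b => ?_, fun q => ?_⟩
  · change (l (a * b)).snd = a * (l b).snd + b * (l a).snd
    rw [map_mul, TrivSqZeroExt.snd_mul, hl1', hl1']
    simp [mul_comm]
  · change (l (algebraMap (MvPolynomial σ k) M q)).snd = _
    rw [hl2]
    change TrivSqZeroExt.snd (TrivSqZeroExt.inl (j q) +
      TrivSqZeroExt.inr (j (MvPolynomial.pderiv i q))) = _
    rw [TrivSqZeroExt.snd_add, TrivSqZeroExt.snd_inl, TrivSqZeroExt.snd_inr, zero_add]
    rfl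

end Normalization

/-! ### Limits at a closed point -/

section Interpolation

set_option linter.unusedSectionVars false

open TensorProduct

theorem exists_mem_derDenom_of_essFiniteType {k T M : Type*} [Field k] [CommRing T] [IsDomain T]
    [Algebra k T] [Algebra.EssFiniteType k T] [Field M] [Algebra T M] [IsFractionRing T M]
    (D : Derivation ℤ M M) (hD : ∀ c : k, D (algebraMap T M (algebraMap k T c)) = 0) :
    ∃ τ : T, τ ≠ 0 ∧ τ ∈ derDenom T D := by
  classical
  obtain ⟨s, hs⟩ := Algebra.EssFiniteType.cond (R := k) (S := T)
  obtain ⟨⟨τ, hτ⟩, hτs⟩ := IsLocalization.exist_integer_multiples_of_finset (nonZeroDivisors T)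
    (s.image fun x => D (algebraMap T M x))
  have hadj : ∀ x ∈ Algebra.adjoin k (s : Set T), ∃ r', algebraMap T M r' =
      algebraMap T M τ * D (algebraMap T M x) := by
    intro x hx
    induction hx using Algebra.adjoin_induction with
    | mem x hx =>
      obtain ⟨r, hr⟩ := hτs _ (Finset.mem_image_of_mem _ hx)
      exact ⟨r, by rw [hr, Algebra.smul_def]⟩
    | algebraMap c => exact ⟨0, by rw [hD, map_zero, mul_zero]⟩
    | add x y _ _ hx hy =>
      obtain ⟨a, ha⟩ := hx
      obtain ⟨b, hb⟩ := hy
      exact ⟨a + b, by rw [map_add, map_add, map_add, ha, hb, mul_add]⟩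
    | mul x y _ _ hx hy =>
      obtain ⟨a, ha⟩ := hx
      obtain ⟨b, hb⟩ := hy
      refine ⟨x * b + y * a, ?_⟩
      rw [map_mul, Derivation.leibniz, map_add, map_mul, map_mul, ha, hb, smul_eq_mul, smul_eq_mul]
      ring
  refine ⟨τ, nonZeroDivisors.ne_zero hτ, fun t => ?_⟩
  obtain ⟨⟨⟨x, hx⟩, ⟨u, hu⟩⟩, htu⟩ := IsLocalization.surj
    ((IsUnit.submonoid T).comap (algebraMap (Algebra.adjoin k (s : Set T)) T)) t
  change t * (u : T) = x at htu
  obtain ⟨v, hv⟩ : ∃ v : T, (u : T) * v = 1 := isUnit_iff_exists_inv.mp hu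
  obtain ⟨a, ha⟩ := hadj x hx
  obtain ⟨b, hb⟩ := hadj u u.2
  refine ⟨v * (a - t * b), ?_⟩
  have h1 := congrArg (fun y => D (algebraMap T M y)) htu
  simp only [map_mul, Derivation.leibniz, smul_eq_mul] at h1
  have h2 : algebraMap T M u * algebraMap T M v = 1 := by rw [← map_mul, hv, map_one]
  rw [map_mul, map_sub, map_mul, ha, hb, ← h1]
  linear_combination (algebraMap T M τ * D (algebraMap T M t)) * h2

theorem exists_mvPowerSeries_of_cauchy {k σ : Type*} [Field k] (P : ℕ → MvPolynomial σ k)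
    (hP : ∀ j, P (j + 1) - P j ∈ MvPolynomial.idealOfVars σ k ^ j) :
    ∃ c : MvPowerSeries σ k, ∀ n (μ : σ →₀ ℕ), μ.degree < n →
      (P n).coeff μ = MvPowerSeries.coeff μ c := by
  refine ⟨fun μ => (P (μ.degree + 1)).coeff μ, fun n μ hμ => ?_⟩
  change _ = (P (μ.degree + 1)).coeff μ
  induction n, (show μ.degree + 1 ≤ n from hμ) using Nat.le_induction with
  | base => rfl
  | succ n hn ih =>
    rw [← ih hn, ← sub_eq_zero, ← MvPolynomial.coeff_sub]
    exact (MvPolynomial.mem_pow_idealOfVars_iff' ..).mp (hP n) μ hn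

variable {k : Type*} [Field k] {σ : Type*} [Finite σ]
  {R : Type*} [CommRing R] [Algebra (MvPolynomial σ k) R] [Module.Finite (MvPolynomial σ k) R]
  {T : Type*} [CommRing T] [Algebra (MvPolynomial σ k) T]
  [Algebra R T] [IsScalarTower (MvPolynomial σ k) R T]
  {m : Ideal T} {hm : ∀ i, algebraMap (MvPolynomial σ k) T (MvPolynomial.X i) ∈ m}

theorem isMaximal_of_vars_mem {p : Ideal R} [p.IsPrime]
    (hp : (MvPolynomial.idealOfVars σ k).map (algebraMap (MvPolynomial σ k) R) ≤ p) :
    p.IsMaximal := by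
  have h1 : (RingHom.ker (MvPolynomial.constantCoeff (σ := σ) (R := k))).IsMaximal :=
    RingHom.ker_isMaximal_of_surjective _ fun c => ⟨MvPolynomial.C c, by simp⟩
  have h2 : RingHom.ker (MvPolynomial.constantCoeff (σ := σ) (R := k)) ≤
      p.comap (algebraMap (MvPolynomial σ k) R) := by
    refine le_trans (fun q hq => ?_) (Ideal.map_le_iff_le_comap.mp hp)
    rw [← pow_one (MvPolynomial.idealOfVars σ k), MvPolynomial.mem_pow_idealOfVars_iff']
    intro μ hμ
    have : μ = 0 := (Finsupp.degree_eq_zero_iff μ).mp (by omega)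
    subst this
    exact hq
  have h3 : (p.comap (algebraMap (MvPolynomial σ k) R)).IsMaximal := by
    rwa [← h1.eq_of_le (Ideal.IsPrime.ne_top inferInstance) h2]
  exact Ideal.isMaximal_of_isIntegral_of_isMaximal_comap p h3

/-- A Mittag-Leffler argument: an element of `T` that is an `m`-adic limit of elements of `R` comes
from `R ⊗ k⟦x⟧`. -/
theorem exists_towerMap_eq_of_forall_approx {s : T}
    (hs : ∀ c, ∃ a : R, s - algebraMap R T a ∈ m ^ c) :
    ∃ a : R ⊗[MvPolynomial σ k] MvPowerSeries σ k,
      ∀ n, towerMap m hm n a = Ideal.Quotient.mk (m ^ n) s := by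
  classical
  let V := MvPolynomial.idealOfVars σ k
  let I : Ideal R := V.map (algebraMap (MvPolynomial σ k) R)
  have : IsNoetherianRing R := IsNoetherianRing.of_finite (MvPolynomial σ k) R
  let K : ℕ → Ideal R := fun n => (m ^ n).comap (algebraMap R T)
  have hK : Antitone K := fun a b hab => Ideal.comap_mono (Ideal.pow_le_pow_right hab)
  have hstab : ∀ j, ∃ N, ∀ n, N ≤ n → K N ≤ K n ⊔ I ^ j := by
    intro j
    have : IsArtinianRing (R ⧸ I ^ j) := isArtinianRing_quotient_of_forall_isMaximal _
      fun p hp hle => by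
        have := hp
        exact isMaximal_of_vars_mem (hp.le_of_pow_le hle)
    let f : ℕ →o (Submodule (R ⧸ I ^ j) (R ⧸ I ^ j))ᵒᵈ :=
      ⟨fun n => OrderDual.toDual ((K n).map (Ideal.Quotient.mk (I ^ j))),
        fun a b hab => Ideal.map_mono (hK hab)⟩
    obtain ⟨N, hN⟩ := IsArtinian.monotone_stabilizes f
    refine ⟨N, fun n hn => ?_⟩
    have h1 : (K N).map (Ideal.Quotient.mk (I ^ j)) = (K n).map (Ideal.Quotient.mk (I ^ j)) :=
      hN n hn
    have h2 := Ideal.le_comap_of_map_le h1.le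
    rwa [Ideal.comap_map_of_surjective _ Ideal.Quotient.mk_surjective, ← RingHom.ker_eq_comap_bot,
      Ideal.mk_ker] at h2
  choose N₀ hN₀ using hstab
  let N : ℕ → ℕ := fun j => j + ∑ i ∈ Finset.range (j + 1), N₀ i
  have hNN₀ : ∀ j, N₀ j ≤ N j := fun j => le_trans
    (Finset.single_le_sum (f := N₀) (fun _ _ => Nat.zero_le _) (Finset.self_mem_range_succ j))
    (Nat.le_add_left _ _)
  have hNj : ∀ j, j ≤ N j := fun j => Nat.le_add_right _ _
  have hNsucc : ∀ j, N j ≤ N (j + 1) := fun j => by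
    simp only [N]
    rw [Finset.sum_range_succ _ (j + 1)]
    omega
  have hstep : ∀ j (r : R), s - algebraMap R T r ∈ m ^ N j →
      ∃ r', s - algebraMap R T r' ∈ m ^ N (j + 1) ∧ r' - r ∈ I ^ j := by
    intro j r hr
    obtain ⟨c, hc⟩ := hs (N (j + 1))
    have h1 : c - r ∈ K (N j) := by
      change algebraMap R T (c - r) ∈ m ^ N j
      have h2 := Ideal.sub_mem _ hr (Ideal.pow_le_pow_right (hNsucc j) hc)
      rw [map_sub]
      convert h2 using 1
      ring
    have h2 := hN₀ j (N (j + 1)) ((hNN₀ j).trans (hNsucc j)) (hK (hNN₀ j) h1)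
    obtain ⟨κ, hκ, ι, hι, hκι⟩ := Submodule.mem_sup.mp h2
    refine ⟨c - κ, ?_, ?_⟩
    · have h3 := Ideal.add_mem _ hc hκ
      rw [map_sub]
      convert h3 using 1
      ring
    · have : c - κ - r = ι := by linear_combination -hκι
      rwa [this]
  choose! next hnext1 hnext2 using hstep
  obtain ⟨r₀, hr₀⟩ := hs (N 0)
  let r : ℕ → R := fun j => Nat.rec r₀ (fun j x => next j x) j
  have hr : ∀ j, s - algebraMap R T (r j) ∈ m ^ N j := by
    intro j
    induction j with
    | zero => exact hr₀
    | succ j ih => exact hnext1 j _ ih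
  have hrI : ∀ j, r (j + 1) - r j ∈ I ^ j := fun j => hnext2 j _ (hr j)
  obtain ⟨d, g, hg⟩ := Module.Finite.exists_fin (R := MvPolynomial σ k) (M := R)
  have hexp : ∀ j, ∃ p : Fin d → MvPolynomial σ k, (∀ l, p l ∈ V ^ j) ∧
      r (j + 1) - r j = ∑ l, p l • g l := by
    intro j
    have h1 : r (j + 1) - r j ∈ V ^ j • (⊤ : Submodule (MvPolynomial σ k) R) := by
      rw [Ideal.smul_top_eq_map, Ideal.map_pow]
      exact hrI j
    rw [← hg, Submodule.mem_ideal_smul_span_iff_exists_sum] at h1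
    obtain ⟨p, hp, hps⟩ := h1
    refine ⟨p, hp, ?_⟩
    rw [← hps, Finsupp.sum_fintype _ _ (by simp)]
  choose p hpV hp using hexp
  obtain ⟨q, hq⟩ : ∃ q : Fin d → MvPolynomial σ k, ∑ l, q l • g l = r 0 :=
    (Submodule.mem_span_range_iff_exists_fun _).mp (hg ▸ Submodule.mem_top)
  let P : Fin d → ℕ → MvPolynomial σ k := fun l j => q l + ∑ i ∈ Finset.range j, p i l
  have hrP : ∀ j, r j = ∑ l, P l j • g l := by
    intro j
    induction j with
    | zero => simp [P, hq]
    | succ j ih =>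
      rw [← sub_add_cancel (r (j + 1)) (r j), hp, ih, ← Finset.sum_add_distrib]
      refine Finset.sum_congr rfl fun l _ => ?_
      simp only [P, Finset.sum_range_succ, ← add_smul]
      congr 1
      ring
  have hc := fun l => exists_mvPowerSeries_of_cauchy (P l) (fun j => by
    have : P l (j + 1) - P l j = p j l := by simp [P, Finset.sum_range_succ]
    rw [this]
    exact hpV j l)
  choose c hc using hc
  refine ⟨∑ l, g l ⊗ₜ c l, fun n => ?_⟩
  have h1 : towerMap m hm n (∑ l, g l ⊗ₜ[MvPolynomial σ k] c l) =
      Ideal.Quotient.mk (m ^ n) (algebraMap R T (r n)) := by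
    rw [map_sum, hrP, map_sum, map_sum]
    refine Finset.sum_congr rfl fun l _ => ?_
    rw [towerMap_tmul, powerSeriesModPow_eq_mk m hm (hc l n), ← map_mul, Algebra.smul_def,
      RingHom.map_mul (algebraMap R T), ← IsScalarTower.algebraMap_apply (MvPolynomial σ k) R T,
      mul_comm]
  rw [h1, eq_comm, Ideal.Quotient.eq]
  exact Ideal.pow_le_pow_right (hNj n) (hr n)

end Interpolation

section ClosedPoint

/-- An element of a domain `T` essentially of finite type, which is a fraction of a normal
finitely generated subalgebra `R` and an `m`-adic limit of elements of `R`, lies in the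
localization of `R` at the contraction of `m`, if this is a maximal ideal. -/
theorem exists_mem_denom_of_approx (k : Type*) {R T : Type*} [Field k] [CharZero k] [CommRing R]
    [IsDomain R] [IsIntegrallyClosed R] [Algebra k R] [Algebra.FiniteType k R] [CommRing T]
    [IsDomain T] [Algebra k T] [Algebra.EssFiniteType k T] [Algebra R T]
    [IsScalarTower k R T] [FaithfulSMul R T] {m : Ideal T} (hm1 : m ≠ ⊤)
    [hQ : (m.comap (algebraMap R T)).IsMaximal] {b α : R} {s : T}
    (hb : algebraMap R T b * s = algebraMap R T α)
    (hs : ∀ c, ∃ a : R, s - algebraMap R T a ∈ m ^ c) :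
    ∃ t ∈ denom b α, algebraMap R T t ∉ m := by
  obtain ⟨d, g, hg, hfin, hgX⟩ := exists_finite_injective_mem_maximal k (m.comap (algebraMap R T))
  let _ : Algebra (MvPolynomial (Fin d) k) R := g.toRingHom.toAlgebra
  let _ : Algebra (MvPolynomial (Fin d) k) T := ((algebraMap R T).comp g.toRingHom).toAlgebra
  have : IsScalarTower (MvPolynomial (Fin d) k) R T := IsScalarTower.of_algebraMap_eq' rfl
  have : Module.Finite (MvPolynomial (Fin d) k) R := hfin
  have : FaithfulSMul (MvPolynomial (Fin d) k) R := by
    rw [faithfulSMul_iff_algebraMap_injective]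
    exact hg
  have : IsNoetherianRing T := Algebra.EssFiniteType.isNoetherianRing k T
  have hm : ∀ i, algebraMap (MvPolynomial (Fin d) k) T (MvPolynomial.X i) ∈ m := hgX
  have : FaithfulSMul R (FractionRing T) := by
    rw [faithfulSMul_iff_algebraMap_injective, IsScalarTower.algebraMap_eq R T]
    exact (FaithfulSMul.algebraMap_injective T _).comp (FaithfulSMul.algebraMap_injective R T)
  choose D hD using fun i : Fin d => exists_extendsPDeriv (k := k) (R := R)
    (M := FractionRing T) i
  obtain ⟨a, ha⟩ := exists_towerMap_eq_of_forall_approx (hm := hm) hs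
  refine exists_mem_denom_of_formal hD (fun i => ?_) hm1 hb ha
  refine exists_mem_derDenom_of_essFiniteType (k := k) (D i) fun c => ?_
  have h1 := hD i (MvPolynomial.C c)
  rw [MvPolynomial.pderiv_C, map_zero, map_zero] at h1
  rw [← h1, IsScalarTower.algebraMap_apply k R T, ← IsScalarTower.algebraMap_apply R T]
  congr 2
  exact (g.commutes c).symm

end ClosedPoint

/-! ### Limits at an arbitrary prime -/

section ResidueParameters

universe u

/-- A transcendence basis of the residue field of a prime `Q`, lifted to `R`: polynomials in the
lifts meet `Q` only in zero, and every element outside `Q` divides a nonzero polynomial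
modulo `Q`. -/
theorem exists_residue_parameters (k : Type*) {R : Type u} [Field k] [CommRing R] [Algebra k R]
    (Q : Ideal R) [Q.IsPrime] :
    ∃ (ι : Type u) (φ : MvPolynomial ι k →ₐ[k] R), (∀ p, φ p ∈ Q → p = 0) ∧
      ∀ r ∉ Q, ∃ v p, p ≠ 0 ∧ r * v - φ p ∈ Q := by
  obtain ⟨ι, x, hx⟩ := exists_isTranscendenceBasis' k (R ⧸ Q)
  choose y hy using fun i => Ideal.Quotient.mk_surjective (x i)
  have hφ : ∀ p, Ideal.Quotient.mk Q (MvPolynomial.aeval y p) = MvPolynomial.aeval x p := fun p => by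
    have h : (Ideal.Quotient.mkₐ k Q).comp (MvPolynomial.aeval y) = MvPolynomial.aeval x := by
      ext i
      simp [hy]
    exact DFunLike.congr_fun h p
  refine ⟨ι, MvPolynomial.aeval y, fun p hp => ?_, fun r hr => ?_⟩
  · rw [← Ideal.Quotient.eq_zero_iff_mem, hφ] at hp
    exact hx.1.eq_zero_of_aeval_eq_zero p hp
  · have := hx.isAlgebraic
    have hr0 : Ideal.Quotient.mk Q r ≠ 0 := mt Ideal.Quotient.eq_zero_iff_mem.1 hr
    obtain ⟨q, hq0, hq⟩ := (Algebra.IsAlgebraic.isAlgebraic (R := Algebra.adjoin k (Set.range x))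
      (Ideal.Quotient.mk Q r)).exists_nonzero_dvd (mem_nonZeroDivisors_of_ne_zero hr0)
    obtain ⟨v, hv⟩ := hq
    obtain ⟨v, rfl⟩ := Ideal.Quotient.mk_surjective v
    obtain ⟨p, hp⟩ := (Algebra.adjoin_range_eq_range_aeval k x).le q.2
    refine ⟨v, p, ?_, ?_⟩
    · rintro rfl
      rw [RingHom.map_zero] at hp
      exact hq0 (Subtype.ext hp.symm)
    · rw [← Ideal.Quotient.eq, RingHom.map_mul, ← hv, hφ]
      exact hp.symm

end ResidueParameters

section GenericFibre

/-- Inverting a submonoid `M` of `B` in a finitely generated algebra gives a finitely generated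
algebra over `M⁻¹B`. -/
theorem finiteType_localization_of_finiteType (k B R : Type*) [CommRing k] [CommRing B]
    [CommRing R] [Algebra k B] [Algebra k R] [Algebra B R]
    [IsScalarTower k B R] [Algebra.FiniteType k R] (M : Submonoid B) :
    Algebra.FiniteType (Localization M) (Localization (Algebra.algebraMapSubmonoid R M)) := by
  classical
  obtain ⟨σ, hσ⟩ := (inferInstance : Algebra.FiniteType k R).out
  refine ⟨σ.image (algebraMap R (Localization (Algebra.algebraMapSubmonoid R M))), ?_⟩
  set A := Algebra.adjoin (Localization M)
    ((σ.image (algebraMap R (Localization (Algebra.algebraMapSubmonoid R M))) : Finset _) :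
      Set (Localization (Algebra.algebraMapSubmonoid R M))) with hA
  have hR : ∀ r : R, algebraMap R _ r ∈ A := fun r => by
    have hr : r ∈ Algebra.adjoin k (σ : Set R) := by rw [hσ]; trivial
    induction hr using Algebra.adjoin_induction with
    | mem x hx =>
      exact Algebra.subset_adjoin (Finset.mem_coe.2 (Finset.mem_image_of_mem _ hx))
    | algebraMap c =>
      rw [IsScalarTower.algebraMap_apply k B R, ← IsScalarTower.algebraMap_apply B R,
        IsScalarTower.algebraMap_apply B (Localization M)]
      exact A.algebraMap_mem _
    | add x y _ _ hx hy => rw [RingHom.map_add]; exact A.add_mem hx hy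
    | mul x y _ _ hx hy => rw [RingHom.map_mul]; exact A.mul_mem hx hy
  rw [eq_top_iff]
  intro z _
  obtain ⟨r, ⟨_, u, hu, rfl⟩, rfl⟩ :=
    IsLocalization.exists_mk'_eq (Algebra.algebraMapSubmonoid R M) z
  have h : IsLocalization.mk' (Localization (Algebra.algebraMapSubmonoid R M)) r
      (⟨algebraMap B R u, u, hu, rfl⟩ : Algebra.algebraMapSubmonoid R M) =
      algebraMap (Localization M) _ (IsLocalization.mk' _ 1 ⟨u, hu⟩) * algebraMap R _ r := by
    rw [IsLocalization.mk'_eq_iff_eq_mul, mul_right_comm,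
      ← IsScalarTower.algebraMap_apply B R, IsScalarTower.algebraMap_apply B (Localization M),
      ← RingHom.map_mul, IsLocalization.mk'_spec' (Localization M) (1 : B) ⟨u, hu⟩ |> (mul_comm _ _).trans]
    simp
  rw [show (⟨(algebraMap B R) u, _⟩ : Algebra.algebraMapSubmonoid R M) = ⟨algebraMap B R u, u, hu, rfl⟩ from rfl, h]
  exact A.mul_mem (A.algebraMap_mem _) (hR r)

end GenericFibre

section PrimePoint

open IsLocalRing

/-- An element of a local domain `T` essentially of finite type, which is a fraction of a normal
finitely generated subalgebra `R` and a limit of elements of the localization `R_Q` at the prime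
`Q` below the maximal ideal, lies in `R_Q`.  Adjoining to the base field a transcendence basis of
the residue field of `Q` reduces this to a maximal `Q`. -/
theorem exists_mem_denom_of_local_approx (k : Type*) {R T : Type*} [Field k] [CharZero k]
    [CommRing R] [IsDomain R] [IsIntegrallyClosed R] [Algebra k R] [Algebra.FiniteType k R]
    [CommRing T] [IsDomain T] [IsLocalRing T] [Algebra k T] [Algebra.EssFiniteType k T]
    [Algebra R T] [IsScalarTower k R T] [FaithfulSMul R T] {b α : R} {s : T}
    (hb : algebraMap R T b * s = algebraMap R T α)
    (hs : ∀ c, ∃ a t : R, algebraMap R T t ∉ maximalIdeal T ∧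
      algebraMap R T t * s - algebraMap R T a ∈ maximalIdeal T ^ c) :
    ∃ t ∈ denom b α, algebraMap R T t ∉ maximalIdeal T := by
  obtain ⟨ι, φ, hφ, hres⟩ := exists_residue_parameters k ((maximalIdeal T).comap (algebraMap R T))
  let _ : Algebra (MvPolynomial ι k) R := φ.toRingHom.toAlgebra
  have : IsScalarTower k (MvPolynomial ι k) R := IsScalarTower.of_algebraMap_eq fun c =>
    (φ.commutes c).symm
  let M := nonZeroDivisors (MvPolynomial ι k)
  let U := Algebra.algebraMapSubmonoid R M
  have hUm : ∀ u ∈ U, algebraMap R T u ∉ maximalIdeal T := by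
    rintro _ ⟨p, hp, rfl⟩ h
    exact nonZeroDivisors.ne_zero hp (hφ p h)
  have hU0 : U ≤ nonZeroDivisors R := fun u hu => mem_nonZeroDivisors_of_ne_zero fun h => by
    apply hUm u hu
    rw [h, RingHom.map_zero]
    exact zero_mem _
  have hUT : ∀ u : U, IsUnit (algebraMap R T u) := fun u => by
    simpa using hUm u u.2
  let K := FractionRing (MvPolynomial ι k)
  let R' := Localization U
  have : IsDomain R' := IsLocalization.isDomain_localization hU0
  have : IsIntegrallyClosed R' := isIntegrallyClosed_of_isLocalization R' U hU0
  let _ : Algebra R' T := (IsLocalization.lift (M := U) hUT : R' →+* T).toAlgebra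
  have hlift : ∀ r : R, algebraMap R' T (algebraMap R R' r) = algebraMap R T r :=
    fun r => IsLocalization.lift_eq hUT r
  let _ : Algebra K R' := inferInstanceAs (Algebra (Localization M) (Localization U))
  have : IsScalarTower (MvPolynomial ι k) K R' := inferInstanceAs
    (IsScalarTower (MvPolynomial ι k) (Localization M) (Localization U))
  have : Algebra.FiniteType K R' := finiteType_localization_of_finiteType k _ R M
  let _ : Algebra K T := ((algebraMap R' T).comp (algebraMap K R')).toAlgebra
  have : IsScalarTower K R' T := IsScalarTower.of_algebraMap_eq' rfl
  have : IsScalarTower k K T := IsScalarTower.of_algebraMap_eq fun c => by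
    change _ = algebraMap R' T (algebraMap K R' (algebraMap k K c))
    rw [IsScalarTower.algebraMap_apply k (MvPolynomial ι k) K,
      ← IsScalarTower.algebraMap_apply (MvPolynomial ι k) K R',
      IsScalarTower.algebraMap_apply (MvPolynomial ι k) R R', hlift,
      ← IsScalarTower.algebraMap_apply k (MvPolynomial ι k) R,
      ← IsScalarTower.algebraMap_apply k R T]
  have : Algebra.EssFiniteType K T := Algebra.EssFiniteType.of_comp k K T
  have : CharZero K := charZero_of_injective_algebraMap (FaithfulSMul.algebraMap_injective k K)
  have : FaithfulSMul R' T := by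
    rw [faithfulSMul_iff_algebraMap_injective, injective_iff_map_eq_zero]
    intro z hz
    obtain ⟨r, u, rfl⟩ := IsLocalization.exists_mk'_eq U z
    have h : algebraMap R T r = 0 := by
      rw [← hlift, ← IsLocalization.mk'_spec R' r u, RingHom.map_mul, hz, zero_mul]
    rw [(FaithfulSMul.algebraMap_injective R T) (h.trans (RingHom.map_zero _).symm),
      IsLocalization.mk'_zero]
  have hmem : ∀ (r : R) (u : U), algebraMap R' T (IsLocalization.mk' R' r u) ∈ maximalIdeal T ↔
      algebraMap R T r ∈ maximalIdeal T := fun r u => by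
    rw [← hlift r, ← IsLocalization.mk'_spec R' r u, RingHom.map_mul]
    refine ⟨fun h => Ideal.mul_mem_right _ _ h, fun h => ?_⟩
    rw [hlift] at h
    exact ((maximalIdeal.isMaximal T).isPrime.mem_or_mem h).resolve_right (hUm u u.2)
  have hQ : ((maximalIdeal T).comap (algebraMap R' T)).IsMaximal := by
    rw [Ideal.isMaximal_iff]
    refine ⟨fun h => ?_, fun J x hJ hx hxJ => ?_⟩
    · rw [Ideal.mem_comap, RingHom.map_one] at h
      exact (Ideal.ne_top_iff_one _).1 (maximalIdeal.isMaximal T).ne_top h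
    obtain ⟨r, u, rfl⟩ := IsLocalization.exists_mk'_eq U x
    rw [Ideal.mem_comap, hmem] at hx
    obtain ⟨v, p, hp0, hp⟩ := hres r hx
    have hr : algebraMap R R' r ∈ J := by
      rw [← IsLocalization.mk'_spec R' r u]
      exact J.mul_mem_right _ hxJ
    have hpJ : algebraMap R R' (φ p) ∈ J := by
      have h1 : algebraMap R R' (r * v - φ p) ∈ J := hJ (by
        rw [Ideal.mem_comap, hlift]; exact hp)
      rw [RingHom.map_sub, RingHom.map_mul] at h1
      exact (J.sub_mem_iff_right (J.mul_mem_right _ hr)).1 h1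
    have hunit : IsUnit (algebraMap R R' (φ p)) :=
      IsLocalization.map_units R' (⟨φ p, p, mem_nonZeroDivisors_of_ne_zero hp0, rfl⟩ : U)
    exact (Ideal.eq_top_iff_one J).1 (J.eq_top_of_isUnit_mem hpJ hunit)
  obtain ⟨t', ht', htm⟩ := exists_mem_denom_of_approx K (R := R') (T := T) (m := maximalIdeal T)
    (maximalIdeal.isMaximal T).ne_top (b := algebraMap R R' b) (α := algebraMap R R' α) (s := s)
    (by rw [hlift, hlift, hb]) fun c => by
      obtain ⟨a, t, ht, hat⟩ := hs c
      have hcop : IsCoprime (Ideal.span {algebraMap R R' t})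
          ((maximalIdeal T).comap (algebraMap R' T) ^ c) := by
        refine IsCoprime.pow_right ?_
        rw [Ideal.isCoprime_iff_sup_eq, sup_comm]
        refine hQ.out.2 _ (lt_of_le_of_ne le_sup_left fun h => ht ?_)
        rw [← hlift, ← Ideal.mem_comap, h]
        exact Ideal.mem_sup_right (Ideal.mem_span_singleton_self _)
      obtain ⟨x, hx, e, he, hxe⟩ := Ideal.isCoprime_iff_exists.1 hcop
      obtain ⟨v, rfl⟩ := Ideal.mem_span_singleton'.1 hx
      refine ⟨v * algebraMap R R' a, ?_⟩
      have he' : algebraMap R' T e ∈ maximalIdeal T ^ c :=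
        Ideal.le_comap_pow (algebraMap R' T) c he
      have hxe' := congrArg (algebraMap R' T) hxe
      rw [RingHom.map_add, RingHom.map_mul, RingHom.map_one, hlift] at hxe'
      rw [RingHom.map_mul, hlift]
      have hcalc : s - algebraMap R' T v * algebraMap R T a = algebraMap R' T e * s +
          algebraMap R' T v * (algebraMap R T t * s - algebraMap R T a) := by
        linear_combination (-s) * hxe'
      rw [hcalc]
      exact Ideal.add_mem _ (Ideal.mul_mem_right _ _ he') (Ideal.mul_mem_left _ _ hat)
  obtain ⟨r, u, rfl⟩ := IsLocalization.exists_mk'_eq U t'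
  rw [hmem] at htm
  rw [mem_denom] at ht'
  obtain ⟨w, hw⟩ := ht'
  obtain ⟨x, v, rfl⟩ := IsLocalization.exists_mk'_eq U w
  refine ⟨r * v, ?_, ?_⟩
  · rw [mem_denom]
    refine ⟨x * u, IsLocalization.injective R' hU0 ?_⟩
    have h1 := IsLocalization.mk'_spec R' r u
    have h2 := IsLocalization.mk'_spec R' x v
    simp only [RingHom.map_mul]
    rw [← h1, ← h2]
    linear_combination (algebraMap R R' u) * (algebraMap R R' v) * hw
  · rw [RingHom.map_mul]
    exact fun h => ((maximalIdeal.isMaximal T).isPrime.mem_or_mem h).elim htm (hUm v v.2)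

end PrimePoint

/-! ### A prime fixed by the automorphism -/

section Invariant

open IsLocalRing

/-- If an automorphism `G` of `S` preserves `R` and fixes the prime `P`, then every `s` with
`G s ∈ R` lies in the localization of `R` at the prime below `P`. -/
theorem exists_mul_mem_of_comap_eq {k S : Type*} [Field k] [CharZero k] [CommRing S] [IsDomain S]
    [Algebra k S] [Algebra.FiniteType k S] (R : Subalgebra k S) [Algebra.FiniteType k R]
    [IsIntegrallyClosed R] (G : S ≃ₐ[k] S) (hG : ∀ r ∈ R, G r ∈ R) (P : Ideal S) [P.IsPrime]
    (hP : P.comap (G : S ≃+* S) = P) {s : S} (hs : G s ∈ R) : ∃ t ∈ R, t ∉ P ∧ t * s ∈ R := by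
  obtain ⟨b, hbR, hb0, hbs⟩ := exists_mul_mem_of_apply_mem R G hG hs
  have hGP : ∀ x, G x ∈ P ↔ x ∈ P := fun x => by
    conv_rhs => rw [← hP]
    rfl
  let GR : R →+* R := ((G : S →+* S).comp R.val.toRingHom).codRestrict R fun r => hG r r.2
  have hGR : ∀ r : R, ((GR r : R) : S) = G r := fun r => rfl
  let Q : Ideal R := P.comap (algebraMap R S)
  have hQ : Q = Q.comap GR := by
    ext r
    exact (hGP r).symm
  let A := Localization.AtPrime Q
  let T := Localization.AtPrime P
  have : IsNoetherianRing R := Algebra.FiniteType.isNoetherianRing k R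
  have : IsNoetherianRing A := IsLocalization.isNoetherianRing Q.primeCompl A inferInstance
  have : IsDomain T := IsLocalization.isDomain_localization P.primeCompl_le_nonZeroDivisors
  let ρ : A →+* T := Localization.localRingHom Q P (algebraMap R S) rfl
  have hρ : ∀ r : R, ρ (algebraMap R A r) = algebraMap S T r :=
    fun r => Localization.localRingHom_to_map Q P _ rfl r
  let γ : A →+* A := Localization.localRingHom Q Q GR hQ
  have hγA : ∀ r : R, γ (algebraMap R A r) = algebraMap R A (GR r) :=
    fun r => Localization.localRingHom_to_map Q Q _ hQ r
  have hmap : P.primeCompl.map (G : S ≃+* S).toMonoidHom = P.primeCompl := by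
    ext x
    refine ⟨?_, fun hx => ⟨G.symm x, fun h => hx ?_, G.apply_symm_apply x⟩⟩
    · rintro ⟨y, hy, rfl⟩ h
      exact hy ((hGP y).1 h)
    · have := (hGP _).2 h
      rwa [G.apply_symm_apply] at this
  let g : T ≃+* T := IsLocalization.ringEquivOfRingEquiv T T (G : S ≃+* S) hmap
  have hg : ∀ x : S, g (algebraMap S T x) = algebraMap S T (G x) :=
    fun x => IsLocalization.ringEquivOfRingEquiv_eq hmap x
  have hγ : ∀ a, ρ (γ a) = g (ρ a) := by
    have h : ρ.comp γ = (g : T →+* T).comp ρ := by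
      apply IsLocalization.ringHom_ext Q.primeCompl
      ext r
      change ρ (γ (algebraMap R A r)) = g (ρ (algebraMap R A r))
      rw [hγA, hρ, hρ, hg, hGR]
    exact RingHom.congr_fun h
  have : Algebra.EssFiniteType k (ResidueField T) :=
    inferInstanceAs (Algebra.EssFiniteType k (T ⧸ maximalIdeal T))
  have hk : ∀ c : k, algebraMap k (ResidueField T) c =
      residue T (algebraMap S T (algebraMap k S c)) := fun c => rfl
  have hkρ : ∀ c : k, algebraMap k (ResidueField T) c =
      ResidueField.map ρ (residue A (algebraMap R A (algebraMap k R c))) := fun c => by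
    rw [ResidueField.map_residue, hρ, hk]
    rfl
  let g' : ResidueField T ≃ₐ[k] ResidueField T := AlgEquiv.ofRingEquiv
    (f := ResidueField.mapEquiv g) fun c => by
      rw [hk]
      change ResidueField.map (g : T →+* T) (residue T _) = _
      rw [ResidueField.map_residue]
      change residue T (g (algebraMap S T (algebraMap k S c))) = _
      rw [hg, G.commutes]
  have hg' : ∀ x, g' (residue T x) = residue T (g x) := fun x => rfl
  let L : Subalgebra k (ResidueField T) :=
    { (ResidueField.map ρ).range with
      algebraMap_mem' := fun c => ⟨_, (hkρ c).symm⟩ }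
  have hL : ∀ x, x ∈ L ↔ ∃ y, ResidueField.map ρ y = x := fun x => Iff.rfl
  have hres : ∀ x a, g x = ρ a → ∃ a', x - ρ a' ∈ maximalIdeal T := by
    intro x a hxa
    obtain ⟨c, hcL, hc0, hcx⟩ := exists_mul_mem_of_apply_mem L g' (s := residue T x)
      (by
        rintro _ ⟨y, rfl⟩
        obtain ⟨y, rfl⟩ := residue_surjective y
        refine ⟨residue A (γ y), ?_⟩
        rw [ResidueField.map_residue, hγ, ResidueField.map_residue, hg'])
      ⟨residue A a, by rw [ResidueField.map_residue, hg', hxa]⟩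
    obtain ⟨c, rfl⟩ := hcL
    obtain ⟨d, hd⟩ := hcx
    obtain ⟨a', ha'⟩ := residue_surjective (c⁻¹ * d)
    refine ⟨a', ?_⟩
    rw [← residue_eq_zero_iff, RingHom.map_sub, ← ResidueField.map_residue, ha', RingHom.map_mul,
      map_inv₀, sub_eq_zero, eq_inv_mul_iff_mul_eq₀ hc0]
    exact hd.symm
  have happ := fun c => exists_sub_mem_pow_of_residue ρ g γ hγ hres c (algebraMap S T s)
    (algebraMap R A ⟨G s, hs⟩) (by rw [hg, hρ])
  have hRT : ∀ r : R, algebraMap R T r = algebraMap S T r := fun r => rfl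
  have : FaithfulSMul R T := by
    rw [faithfulSMul_iff_algebraMap_injective]
    exact (IsLocalization.injective T P.primeCompl_le_nonZeroDivisors).comp Subtype.val_injective
  have hmem : ∀ x : S, algebraMap S T x ∈ maximalIdeal T ↔ x ∈ P := fun x =>
    IsLocalization.AtPrime.to_map_mem_maximal_iff T P x
  obtain ⟨t, ht, htP⟩ := exists_mem_denom_of_local_approx k (R := R) (T := T) (b := ⟨b, hbR⟩)
    (α := ⟨b * s, hbs⟩) (s := algebraMap S T s) (by rw [hRT, hRT, ← RingHom.map_mul]) fun c => by
      obtain ⟨a', ha'⟩ := happ c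
      obtain ⟨a, t, rfl⟩ := IsLocalization.exists_mk'_eq Q.primeCompl a'
      refine ⟨a, t, fun h => t.2 ((hmem _).1 h), ?_⟩
      have h1 := congrArg ρ (IsLocalization.mk'_spec' A a t)
      rw [RingHom.map_mul, hρ, hρ] at h1
      rw [hRT, hRT, ← h1, ← mul_sub]
      exact Ideal.mul_mem_left _ _ ha'
  refine ⟨t, t.2, fun h => htP ((hmem _).2 h), ?_⟩
  obtain ⟨w, hw⟩ := mem_denom.1 ht
  have hw' : (t : S) * (b * s) = b * w := congrArg Subtype.val hw
  have : (t : S) * s = w := mul_left_cancel₀ hb0 (by linear_combination hw')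
  rw [this]
  exact w.2

end Invariant

/-! ### Bad primes -/

section Bad

variable {k S : Type*} [Field k] [CommRing S] [Algebra k S]

/-- For some `s` which a power of `Φ` sends into `R`, all elements of `R` multiplying `s` into `R`
lie in `I`.  For a prime `I` this says that `⋃ Φ⁻ⁿ R` is not contained in `R_I`. -/
def IsBad (R : Subalgebra k S) (Φ : S ≃ₐ[k] S) (I : Ideal R) : Prop :=
  ∃ (n : ℕ) (s : S), (Φ ^ n) s ∈ R ∧ ∀ t : R, t * s ∈ R → t ∈ I

theorem pow_apply_mem {R : Subalgebra k S} {Φ : S ≃ₐ[k] S} (hΦ : ∀ r ∈ R, Φ r ∈ R) (n : ℕ) :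
    ∀ r ∈ R, (Φ ^ n) r ∈ R := by
  induction n with
  | zero => exact fun r hr => hr
  | succ n ih =>
    intro r hr
    rw [pow_succ, AlgEquiv.mul_apply]
    exact ih _ (hΦ r hr)

theorem IsBad.comap {R : Subalgebra k S} {Φ : S ≃ₐ[k] S} (hΦ : ∀ r ∈ R, Φ r ∈ R) {P : Ideal S}
    (h : IsBad R Φ (P.comap (algebraMap R S))) :
    IsBad R Φ ((P.comap (Φ : S ≃+* S)).comap (algebraMap R S)) := by
  obtain ⟨n, s, hs, hP⟩ := h
  refine ⟨n + 1, Φ.symm s, ?_, fun t ht => ?_⟩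
  · rw [pow_succ, AlgEquiv.mul_apply, Φ.apply_symm_apply]
    exact hs
  · refine hP ⟨Φ t, hΦ t t.2⟩ ?_
    have := hΦ _ ht
    rwa [map_mul, Φ.apply_symm_apply] at this

/-- The obstruction to `⋃ Φ⁻ⁿ R ⊆ R` is concentrated in finitely many height one primes: such a
prime lies under no prime of `S`, so by Chevalley's theorem it contains a fixed nonzero `f`. -/
theorem exists_finset_isBad [IsDomain S] [Algebra.FiniteType k S] (R : Subalgebra k S)
    [Algebra.FiniteType k R] [IsIntegrallyClosed R] (Φ : S ≃ₐ[k] S) (hΦ : ∀ r ∈ R, Φ r ∈ R) :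
    ∃ M : Finset (Ideal R), (∀ p ∈ M, p.IsPrime ∧ p.height = 1 ∧ IsBad R Φ p) ∧
      ∀ Q : Ideal R, Q.IsPrime → IsBad R Φ Q → ∃ p ∈ M, p ≤ Q := by
  have : IsNoetherianRing R := Algebra.FiniteType.isNoetherianRing k R
  have : Algebra.FiniteType R S := Algebra.FiniteType.of_restrictScalars_finiteType k R S
  obtain ⟨f, hf0, hf⟩ := exists_forall_mem_range_comap (R := R) (S := S)
  have hfin : {p ∈ (Ideal.span {f}).minimalPrimes | p.height = 1 ∧ IsBad R Φ p}.Finite :=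
    (Ideal.finite_minimalPrimes_of_isNoetherianRing R _).subset fun p hp => hp.1
  refine ⟨hfin.toFinset, fun p hp => ?_, fun Q hQ hbad => ?_⟩
  · obtain ⟨h1, h2⟩ := hfin.mem_toFinset.1 hp
    exact ⟨h1.1.1, h2⟩
  obtain ⟨n, s, hs, hsQ⟩ := hbad
  obtain ⟨b, hbR, hb0, hbs⟩ := exists_mul_mem_of_apply_mem R (Φ ^ n) (pow_apply_mem hΦ n) hs
  let b' : R := ⟨b, hbR⟩
  let α : R := ⟨b * s, hbs⟩
  have hb' : b' ≠ 0 := fun h => hb0 (congrArg Subtype.val h)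
  have hden : ∀ t : R, t ∈ denom b' α ↔ (t : S) * s ∈ R := fun t => by
    rw [mem_denom]
    constructor
    · rintro ⟨w, hw⟩
      have hw' : (t : S) * (b * s) = b * w := congrArg Subtype.val hw
      have : (t : S) * s = w := mul_left_cancel₀ hb0 (by linear_combination hw')
      rw [this]
      exact w.2
    · intro h
      exact ⟨⟨_, h⟩, Subtype.ext (show (t : S) * (b * s) = b * (t * s) by ring)⟩
  obtain ⟨p, hp, hpQ⟩ := Ideal.exists_minimalPrimes_le (I := denom b' α) (J := Q)
    fun t ht => hsQ t ((hden t).1 ht)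
  have hpp : p.IsPrime := hp.1.1
  have hbp : b' ∈ p := hp.1.2 ((hden b').2 hbs)
  obtain ⟨β, rfl⟩ := exists_eq_denom_of_mem_minimalPrimes hp
  obtain ⟨a, t, hat⟩ := exists_isLocallyGenBy (β := β) hb'
  have hne : denom b' β ≠ ⊥ := fun h => hb' (by rwa [h] at hbp)
  have hht := hat.height_eq_one hne
  obtain ⟨c, hc, w, hw, hcw⟩ := exists_inverse_of_mem_minimalPrimes hp hat hb'
  have hcw' : (c : S) * s = w := mul_left_cancel₀ hb0 (by
    have : (c : S) * (b * s) = b * w := congrArg Subtype.val hcw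
    linear_combination this)
  have hfp : f ∈ denom b' β := by
    by_contra hfp
    obtain ⟨P, hP, hPp⟩ := hf _ hpp hfp
    rw [← hPp] at hc hw
    refine hw (show (w : S) ∈ P from ?_)
    rw [← hcw']
    exact P.mul_mem_right _ hc
  refine ⟨_, hfin.mem_toFinset.2 ⟨⟨⟨hpp, ?_⟩, fun q hq hqp => ?_⟩, hht, n, s, hs, fun t ht =>
    hp.1.2 ((hden t).2 ht)⟩, hpQ⟩
  · rwa [Ideal.span_singleton_le_iff_mem]
  · have := hq.1
    have hq0 : q ≠ ⊥ := fun h => hf0 (by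
      have := hq.2 (Ideal.mem_span_singleton_self f)
      rwa [h] at this)
    by_contra hlt
    have hlt' : q < denom b' β := lt_of_le_not_ge hqp hlt
    have h1 : q.height + 1 ≤ (denom b' β).height := Ideal.height_add_one_le_of_lt_of_isPrime hlt'
    rw [hht] at h1
    have h2 : q.height = 0 := by
      by_contra h
      have := Order.one_le_iff_ne_zero.2 h
      have h3 := (add_le_add_left this 1).trans h1
      exact absurd h3 (by decide)
    exact hq0 (Ideal.height_eq_zero_iff_eq_bot.1 h2)

end Bad

theorem Ideal.heightOf_eq_height {R : Type*} [CommRing R] (p : Ideal R) [hp : p.IsPrime] :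
    p.heightOf = p.height := by
  have h : p.height = Order.height (⟨p, hp⟩ : PrimeSpectrum R) :=
    PrimeSpectrum.height_eq_orderHeight ⟨p, hp⟩
  rw [h]
  apply le_antisymm
  · exact iInf₂_le (⟨p, hp⟩ : PrimeSpectrum R) (le_refl p)
  · exact le_iInf₂ fun q hq => Order.height_mono hq

/-- The primes of `S` over bad primes of `R` form a closed set stable under `Φ`, so `Φ` permutes its
finitely many components; an iterate `G` of `Φ` fixing one of them, and sending the witness `s` of
its badness into `R`, contradicts `exists_mul_mem_of_comap_eq`. -/
theorem not_isBad {k S : Type*} [Field k] [CharZero k]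
    [CommRing S] [IsDomain S] [Algebra k S] [Algebra.FiniteType k S]
    (R : Subalgebra k S) [Algebra.FiniteType k R] [IsIntegrallyClosed R]
    (Φ : S ≃ₐ[k] S) (hΦ : ∀ r ∈ R, Φ r ∈ R) (P : Ideal S) [P.IsPrime] :
    ¬ IsBad R Φ (P.comap (algebraMap R S)) := by
  intro hbad
  have : IsNoetherianRing S := Algebra.FiniteType.isNoetherianRing k S
  obtain ⟨M, hM, hMle⟩ := exists_finset_isBad R Φ hΦ
  let J : Ideal S := sInf {P | P.IsPrime ∧ IsBad R Φ (P.comap (algebraMap R S))}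
  have hJ : ∀ P : Ideal S, P.IsPrime → J ≤ P → IsBad R Φ (P.comap (algebraMap R S)) := by
    intro P hP hJP
    have hN : M.inf (fun p => p.map (algebraMap R S)) ≤ J := by
      refine le_sInf fun P' hP' => ?_
      obtain ⟨p, hpM, hp⟩ := hMle _ (hP'.1.comap _) hP'.2
      exact (Finset.inf_le hpM).trans (Ideal.map_le_iff_le_comap.2 hp)
    obtain ⟨p, hpM, hp⟩ := (hP.inf_le').1 (hN.trans hJP)
    obtain ⟨n, s, hs, ht⟩ := (hM p hpM).2.2
    exact ⟨n, s, hs, fun t h => Ideal.map_le_iff_le_comap.1 hp (ht t h)⟩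
  have hJΦ : J.comap (Φ : S ≃+* S) = J := by
    apply Ideal.comap_eq_of_le_comap
    intro x hx
    rw [Ideal.mem_comap]
    refine Ideal.mem_sInf.2 fun {P'} hP' => ?_
    exact Ideal.mem_sInf.1 hx (I := P'.comap (Φ : S ≃+* S)) ⟨hP'.1.comap _, hP'.2.comap hΦ⟩
  have hmin : ∀ P' ∈ J.minimalPrimes, P'.comap (Φ : S ≃+* S) ∈ J.minimalPrimes := by
    intro P' hP'
    have := Ideal.comap_minimalPrimes_eq_of_surjective (f := ((Φ : S ≃+* S) : S →+* S))
      Φ.surjective J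
    have h2 : J.comap ((Φ : S ≃+* S) : S →+* S) = J := hJΦ
    rw [h2] at this
    rw [this]
    exact ⟨P', hP', rfl⟩
  have : Finite J.minimalPrimes := Ideal.finite_minimalPrimes_of_isNoetherianRing S J
  let c : J.minimalPrimes → J.minimalPrimes := fun P' => ⟨_, hmin P' P'.2⟩
  have hc : Function.Injective c := fun P₁ P₂ h => Subtype.ext
    (Ideal.comap_injective_of_surjective (Φ : S ≃+* S) Φ.surjective (congrArg Subtype.val h))
  have hciter : ∀ (j : ℕ) (P' : J.minimalPrimes), ((c^[j] P' : J.minimalPrimes) : Ideal S) =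
      P'.1.comap ((Φ ^ j : S ≃ₐ[k] S) : S ≃+* S) := by
    intro j
    induction j with
    | zero => intro P'; rfl
    | succ j ih =>
      intro P'
      rw [Function.iterate_succ_apply, ih, pow_succ']
      rfl
  obtain ⟨P₀, hP₀, -⟩ := Ideal.exists_minimalPrimes_le (I := J) (J := P)
    (sInf_le ⟨inferInstance, hbad⟩)
  have hP₀p : P₀.IsPrime := hP₀.1.1
  obtain ⟨N, hN, hper⟩ := hc.mem_periodicPts ⟨P₀, hP₀⟩
  obtain ⟨n, s, hs, hsP⟩ := hJ P₀ hP₀p hP₀.1.2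
  have hG : P₀.comap ((Φ ^ (N * n) : S ≃ₐ[k] S) : S ≃+* S) = P₀ := by
    rw [← hciter (N * n) ⟨P₀, hP₀⟩]
    exact congrArg Subtype.val (hper.mul_const n)
  have hGs : (Φ ^ (N * n)) s ∈ R := by
    obtain ⟨d, hd⟩ := Nat.exists_eq_add_of_le' (Nat.le_mul_of_pos_left n hN)
    rw [hd, pow_add, AlgEquiv.mul_apply]
    exact pow_apply_mem hΦ d _ hs
  obtain ⟨t, htR, htP, hts⟩ := exists_mul_mem_of_comap_eq R (Φ ^ (N * n))
    (pow_apply_mem hΦ _) P₀ hG hGs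
  exact htP (hsP ⟨t, htR⟩ hts)

/-- Let `k` be a field of characteristic 0 and `S`, `R` affine domains over `k` with
`R` a `k`-subalgebra of `S`.  Assume `R` is integrally closed (in its fraction field)
and every ideal of height 1 in `R` generates a proper ideal in `S`.  If a `k`-algebra
endomorphism `F : S → S` with `F(R) ⊆ R` is bijective, then so is its restriction
`R → R`. -/
theorem subring_invariant_automorphism_restricts
    {k S : Type*} [Field k] [CharZero k]
    [CommRing S] [IsDomain S] [Algebra k S] [Algebra.FiniteType k S]
    (R : Subalgebra k S) [Algebra.FiniteType k ↥R]
    [IsIntegrallyClosed ↥R]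
    (hht : ∀ I : Ideal ↥R, I.heightOf = 1 → Ideal.map (algebraMap ↥R S) I ≠ ⊤)
    (F : S →ₐ[k] S) (hF : ∀ r ∈ R, F r ∈ R)
    (hFbij : Function.Bijective F) :
    Function.Bijective (fun r : ↥R => (⟨F r.1, hF r.1 r.2⟩ : ↥R)) := by
  refine ⟨fun x y h => Subtype.ext (hFbij.1 (congrArg Subtype.val h)), fun r₀ => ?_⟩
  let Φ : S ≃ₐ[k] S := AlgEquiv.ofBijective F hFbij
  have hΦ : ∀ r ∈ R, Φ r ∈ R := hF
  obtain ⟨s, hs⟩ := hFbij.2 r₀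
  by_cases hsR : s ∈ R
  · exact ⟨⟨s, hsR⟩, Subtype.ext hs⟩
  exfalso
  obtain ⟨M, hM, hMle⟩ := exists_finset_isBad R Φ hΦ
  let I : Ideal R :=
    { carrier := {t | (t : S) * s ∈ R}
      zero_mem' := by simp
      add_mem' := fun {x y} hx hy => by
        change ((x + y : R) : S) * s ∈ R
        rw [R.coe_add, add_mul]
        exact R.add_mem hx hy
      smul_mem' := fun a x hx => by
        change ((a * x : R) : S) * s ∈ R
        rw [R.coe_mul, mul_assoc]
        exact R.mul_mem a.2 hx }
  have hI : I ≠ ⊤ := fun h => hsR (by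
    have : (1 : R) ∈ I := h ▸ trivial
    have h1 : ((1 : R) : S) * s ∈ R := this
    simpa using h1)
  obtain ⟨Q, hQ, hIQ⟩ := Ideal.exists_le_maximal I hI
  obtain ⟨p, hpM, -⟩ := hMle Q hQ.isPrime ⟨1, s, by
    rw [pow_one]
    change F s ∈ R
    rw [hs]
    exact r₀.2, fun t ht => hIQ ht⟩
  obtain ⟨hp, hp1, n, s', hs', hs'p⟩ := hM p hpM
  obtain ⟨P, hP, hpP⟩ := Ideal.exists_le_maximal _ (hht p (by rw [p.heightOf_eq_height, hp1]))
  have := hP.isPrime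
  exact not_isBad R Φ hΦ P ⟨n, s', hs', fun t ht => Ideal.map_le_iff_le_comap.1 hpP (hs'p t ht)⟩
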